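/- Let G ≤ SL(2,ℝ) be a non-uniform lattice and let e ∈ ℝ be a cusp of G, i.e. a point of ℝ fixed by some parabolic element of G (an element of trace ±2 different from ±Id). Then for every ḡ ∈ SL(2,ℝ) with ḡ·e = ∞, the Lagrange spectrum 𝓛(ḡGḡ⁻¹, ∞) of the conjugated group contains a Hall ray: there exists L₀ ∈ ℝ such that every extended real L with L₀ ≤ L ≤ +∞ belongs to 𝓛(ḡGḡ⁻¹, ∞). -/

import Mathlib

/-!
Conjugation moves the cusp to `∞`. Discreteness then bounds away from zero the lower left entries
of the elements moving `∞`. Since half-discs have infinite area, finite area of the quotient makes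
the orbit of `∞` dense. Hence there are pairs of orbit points `h·∞` and `k·∞`, badly approximable by
the rest of the orbit and with arbitrarily large lower left entries, at distances arbitrarily
close to any prescribed `t n`. Suitable infinite products of such elements converge at the boundary
to a point whose only large approximation constants come from the prefix products; every other one
of these is asymptotic to `t n` and the remaining ones are bounded, so the point has Lagrange value
`lim t n`.
-/

open scoped ENNReal
open MeasureTheory

noncomputable section

/-- `SL(2,ℝ)`. -/
abbrev SL2R := Matrix.SpecialLinearGroup (Fin 2) ℝ

/-- The entry in position (1,1) of a matrix in `SL(2,ℝ)`. -/
def entryA (g : SL2R) : ℝ := g.1 0 0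

/-- The entry in position (1,2) of a matrix in `SL(2,ℝ)`. -/
def entryB (g : SL2R) : ℝ := g.1 0 1

/-- The entry in position (2,1) of a matrix in `SL(2,ℝ)`. -/
def entryC (g : SL2R) : ℝ := g.1 1 0

/-- The entry in position (2,2) of a matrix in `SL(2,ℝ)`. -/
def entryD (g : SL2R) : ℝ := g.1 1 1

/-- The Möbius action of `g ∈ SL(2,ℝ)` on the complex plane (well defined on the
upper half-plane): `z ↦ (az+b)/(cz+d)`. -/
def moeb (g : SL2R) (z : ℂ) : ℂ :=
  ((entryA g : ℂ) * z + (entryB g : ℂ)) / ((entryC g : ℂ) * z + (entryD g : ℂ))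

/-- The upper half-plane `ℍ = {z : 0 < Im z}`, as a subset of `ℂ`. -/
def UHP : Set ℂ := {z : ℂ | 0 < z.im}

/-- Hyperbolic area of a subset of the upper half-plane: `∫∫ dx dy / y²`. -/
def hypArea (s : Set ℂ) : ℝ≥0∞ := ∫⁻ z in s, ENNReal.ofReal (1 / z.im ^ 2)

/-- A subgroup of `SL(2,ℝ)` is discrete if each of its elements is isolated
(in the topology of coefficientwise convergence). -/
def IsDiscreteSubgroup (G : Subgroup SL2R) : Prop :=
  ∀ g ∈ G, ∃ ε > (0 : ℝ), ∀ h ∈ G, (∀ i j, |h.1 i j - g.1 i j| < ε) → h = g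

/-- `F` is a (measurable) fundamental domain for the action of `G` on the upper
half-plane: the `G`-translates of `F` cover `ℍ`, and for every `g ∈ G` acting
nontrivially, `F` and `g·F` overlap in hyperbolic area zero. -/
def IsFundDom (G : Subgroup SL2R) (F : Set ℂ) : Prop :=
  F ⊆ UHP ∧ MeasurableSet F ∧
    (∀ z ∈ UHP, ∃ g ∈ G, moeb g z ∈ F) ∧
    (∀ g ∈ G, (∃ z ∈ UHP, moeb g z ≠ z) → hypArea (F ∩ (moeb g '' F)) = 0)

/-- `G ≤ SL(2,ℝ)` is a non-uniform lattice: it is discrete, it admits a fundamental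
domain of finite hyperbolic area, and the quotient `G\ℍ` is not compact (no compact
subset of `ℍ` meets every orbit). -/
def IsNonUniformLattice (G : Subgroup SL2R) : Prop :=
  IsDiscreteSubgroup G ∧
    (∃ F : Set ℂ, IsFundDom G F ∧ hypArea F < ⊤) ∧
    ¬ ∃ K : Set ℂ, IsCompact K ∧ K ⊆ UHP ∧ ∀ z ∈ UHP, ∃ g ∈ G, moeb g z ∈ K

/-- `∞` is a cusp of `G`: `G` contains a parabolic element `[[1,μ],[0,1]]` with `μ ≠ 0`. -/
def HasCuspAtInfty (G : Subgroup SL2R) : Prop :=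
  ∃ μ : ℝ, μ ≠ 0 ∧ ∃ p : SL2R, p.1 = !![1, μ; 0, 1] ∧ p ∈ G

/-- The set of `k > 0` such that there are infinitely many `g ∈ G`, with pairwise
distinct values `g·∞ = a(g)/c(g) ∈ ℝ`, with `|α − g·∞| < 1/(k c(g)²)`. -/
def LagrangeSet (G : Subgroup SL2R) (α : ℝ) : Set ℝ :=
  {k : ℝ | 0 < k ∧
    {v : ℝ | ∃ g ∈ G, entryC g ≠ 0 ∧ v = entryA g / entryC g ∧
      |α - v| < 1 / (k * entryC g ^ 2)}.Infinite}

/-- The Lagrange value `L_G(α) ∈ [0,∞]` (with the convention `sup ∅ = 0`). -/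
def LagrangeValue (G : Subgroup SL2R) (α : ℝ) : ℝ≥0∞ :=
  sSup (ENNReal.ofReal '' LagrangeSet G α)

/-- The Lagrange spectrum of `G` at `∞`. -/
def LagrangeSpectrum (G : Subgroup SL2R) : Set ℝ≥0∞ :=
  {L : ℝ≥0∞ | ∃ α : ℝ, LagrangeValue G α = L}

/-- The Möbius action of `g ∈ SL(2,ℝ)` on the real line: `x ↦ (ax+b)/(cx+d)`. -/
def moebR (g : SL2R) (x : ℝ) : ℝ := (entryA g * x + entryB g) / (entryC g * x + entryD g)

/-- `g ∈ SL(2,ℝ)` is parabolic: it has trace `±2` and is different from `±Id`. -/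
def IsParabolic (g : SL2R) : Prop :=
  |entryA g + entryD g| = 2 ∧ g.1 ≠ (1 : Matrix (Fin 2) (Fin 2) ℝ) ∧
    g.1 ≠ (-1 : Matrix (Fin 2) (Fin 2) ℝ)

/-- `e ∈ ℝ` is a cusp of `G`: it is fixed by some parabolic element of `G`. -/
def IsCuspPointOf (G : Subgroup SL2R) (e : ℝ) : Prop :=
  ∃ g ∈ G, IsParabolic g ∧ entryC g * e + entryD g ≠ 0 ∧ moebR g e = e

/-! ### Matrix entries and discreteness -/

lemma entryA_mul (g h : SL2R) :
    entryA (g * h) = entryA g * entryA h + entryB g * entryC h := by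
  simp [entryA, entryB, entryC, Matrix.mul_apply, Fin.sum_univ_two]

lemma entryB_mul (g h : SL2R) :
    entryB (g * h) = entryA g * entryB h + entryB g * entryD h := by
  simp [entryA, entryB, entryD, Matrix.mul_apply, Fin.sum_univ_two]

lemma entryC_mul (g h : SL2R) :
    entryC (g * h) = entryC g * entryA h + entryD g * entryC h := by
  simp [entryA, entryD, entryC, Matrix.mul_apply, Fin.sum_univ_two]

lemma entryD_mul (g h : SL2R) :
    entryD (g * h) = entryC g * entryB h + entryD g * entryD h := by
  simp [entryB, entryD, entryC, Matrix.mul_apply, Fin.sum_univ_two]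

lemma entryA_inv (g : SL2R) : entryA g⁻¹ = entryD g := by
  simp [entryA, entryD, Matrix.SpecialLinearGroup.coe_inv, Matrix.adjugate_fin_two]

lemma entryB_inv (g : SL2R) : entryB g⁻¹ = -entryB g := by
  simp [entryB, Matrix.SpecialLinearGroup.coe_inv, Matrix.adjugate_fin_two]

lemma entryC_inv (g : SL2R) : entryC g⁻¹ = -entryC g := by
  simp [entryC, Matrix.SpecialLinearGroup.coe_inv, Matrix.adjugate_fin_two]

lemma entryD_inv (g : SL2R) : entryD g⁻¹ = entryA g := by
  simp [entryA, entryD, Matrix.SpecialLinearGroup.coe_inv, Matrix.adjugate_fin_two]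

lemma entry_det (g : SL2R) : entryA g * entryD g - entryB g * entryC g = 1 := by
  rw [← g.2, Matrix.det_fin_two]
  rfl

lemma entryC_inv_ne_zero {g : SL2R} (hg : entryC g ≠ 0) : entryC g⁻¹ ≠ 0 := by
  rwa [entryC_inv, neg_ne_zero]

/-- The elements of `SL(2,ℝ)` all of whose entries have absolute value at most `N`. -/
def entryBall (N : ℝ) : Set SL2R := {g | ∀ i j, |g.1 i j| ≤ N}

lemma mem_entryBall {N : ℝ} {g : SL2R} : g ∈ entryBall N ↔
    (|entryA g| ≤ N ∧ |entryB g| ≤ N) ∧ |entryC g| ≤ N ∧ |entryD g| ≤ N := by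
  simp only [entryBall, Set.mem_ofPred_eq, Fin.forall_fin_two, entryA, entryB, entryC, entryD]

lemma continuous_entry (i j : Fin 2) : Continuous fun g : SL2R ↦ g.1 i j :=
  Matrix.SpecialLinearGroup.isClosedEmbedding_val.continuous.matrix_elem i j

lemma isCompact_entryBall (N : ℝ) : IsCompact (entryBall N) := by
  have hbox : IsCompact (Set.univ.pi fun _ : Fin 2 ↦ Set.univ.pi fun _ : Fin 2 ↦ Set.Icc (-N) N) :=
    isCompact_univ_pi fun _ ↦ isCompact_univ_pi fun _ ↦ isCompact_Icc
  have hemb := Matrix.SpecialLinearGroup.isClosedEmbedding_val (n := Fin 2) (R := ℝ)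
  refine (hemb.isCompact_preimage hbox).of_isClosed_subset ?_ fun g hg i _ j _ ↦ abs_le.1 (hg i j)
  simp only [entryBall, Set.ofPred_forall]
  exact isClosed_iInter fun i ↦ isClosed_iInter fun j ↦
    isClosed_le (continuous_entry i j).abs continuous_const

lemma discreteTopology_of_isDiscreteSubgroup {G : Subgroup SL2R} (hG : IsDiscreteSubgroup G) :
    DiscreteTopology G := by
  refine discreteTopology_iff_isOpen_singleton.2 fun ⟨g, hg⟩ ↦ ?_
  obtain ⟨ε, hε, hiso⟩ := hG g hg
  have hopen : IsOpen {h : G | ∀ i j, |h.1.1 i j - g.1 i j| < ε} := by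
    simp only [Set.ofPred_forall]
    refine isOpen_iInter_of_finite fun i ↦ isOpen_iInter_of_finite fun j ↦
      isOpen_lt ?_ continuous_const
    exact (((continuous_entry i j).comp continuous_subtype_val).sub continuous_const).abs
  convert hopen using 1
  ext h
  refine ⟨?_, fun hh ↦ Subtype.ext (hiso h h.2 hh)⟩
  rintro rfl
  simpa using hε

lemma discreteTopology_map_conj (G : Subgroup SL2R) [DiscreteTopology G] (k : SL2R) :
    DiscreteTopology (G.map (MulAut.conj k).toMonoidHom) := by
  have hmem : ∀ x ∈ G.map (MulAut.conj k).toMonoidHom, k⁻¹ * x * k ∈ G := by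
    rintro _ ⟨g, hg, rfl⟩
    simpa [mul_assoc] using hg
  refine DiscreteTopology.of_continuous_injective (β := G)
    (f := fun x ↦ ⟨k⁻¹ * x * k, hmem x x.2⟩) (by fun_prop) fun x y hxy ↦ ?_
  exact Subtype.ext (mul_left_cancel (mul_right_cancel (Subtype.ext_iff.1 hxy)))

section Discrete

variable (Γ : Subgroup SL2R) [DiscreteTopology Γ]

lemma finite_inter_entryBall (N : ℝ) : ((Γ : Set SL2R) ∩ entryBall N).Finite := by
  have hclosed : IsClosed (Γ : Set SL2R) := Subgroup.isClosed_of_discrete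
  refine ((isCompact_entryBall N).inter_left hclosed).finite ?_
  exact (isDiscrete_iff_discreteTopology.2 ‹_›).mono Set.inter_subset_left

lemma countable_of_discreteTopology : Countable Γ := by
  have : SecondCountableTopology (Matrix (Fin 2) (Fin 2) ℝ) :=
    inferInstanceAs (SecondCountableTopology (Fin 2 → Fin 2 → ℝ))
  have : SecondCountableTopology SL2R :=
    Matrix.SpecialLinearGroup.isClosedEmbedding_val.isEmbedding.secondCountableTopology
  exact TopologicalSpace.separableSpace_iff_countable.1 inferInstance

end Discrete

/-! ### Translations and parabolic elements -/

/-- The parabolic matrix `[[1, b], [0, 1]]`, acting as `z ↦ z + b`. -/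
def translation (b : ℝ) : SL2R := ⟨!![1, b; 0, 1], by simp [Matrix.det_fin_two]⟩

@[simp] lemma entryA_translation (b : ℝ) : entryA (translation b) = 1 := rfl

@[simp] lemma entryB_translation (b : ℝ) : entryB (translation b) = b := rfl

@[simp] lemma entryC_translation (b : ℝ) : entryC (translation b) = 0 := rfl

@[simp] lemma entryD_translation (b : ℝ) : entryD (translation b) = 1 := rfl

lemma SL2R_ext {g h : SL2R} (hA : entryA g = entryA h) (hB : entryB g = entryB h)
    (hC : entryC g = entryC h) (hD : entryD g = entryD h) : g = h := by
  ext i j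
  fin_cases i <;> fin_cases j
  exacts [hA, hB, hC, hD]

lemma translation_add (b b' : ℝ) : translation (b + b') = translation b * translation b' := by
  apply SL2R_ext <;> simp [entryA_mul, entryB_mul, entryC_mul, entryD_mul, add_comm]

lemma translation_neg (b : ℝ) : translation (-b) = (translation b)⁻¹ := by
  apply SL2R_ext <;> simp [entryA_inv, entryB_inv, entryC_inv, entryD_inv]

lemma translation_zero : translation 0 = 1 := by
  rw [← neg_add_cancel (0 : ℝ), translation_add, translation_neg, inv_mul_cancel]

lemma translation_zsmul_mem {Γ : Subgroup SL2R} {μ : ℝ} (hμ : translation μ ∈ Γ) (j : ℤ) :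
    translation (j * μ) ∈ Γ := by
  induction j using Int.induction_on with
  | zero => simp [translation_zero]
  | succ n ih =>
    push_cast
    rw [add_mul, one_mul, translation_add]
    exact Γ.mul_mem ih hμ
  | pred n ih =>
    push_cast at ih ⊢
    rw [sub_mul, one_mul, sub_eq_add_neg, translation_add, translation_neg μ]
    exact Γ.mul_mem ih (Γ.inv_mem hμ)

lemma HasCuspAtInfty.exists_pos {Γ : Subgroup SL2R} (hΓ : HasCuspAtInfty Γ) :
    ∃ μ : ℝ, 0 < μ ∧ translation μ ∈ Γ := by
  obtain ⟨μ, hμ, p, hp, hpΓ⟩ := hΓ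
  have hp : p = translation μ := Subtype.ext hp
  obtain hneg | hpos := lt_or_gt_of_ne hμ
  · exact ⟨-μ, by linarith, by rw [translation_neg, ← hp]; exact Γ.inv_mem hpΓ⟩
  · exact ⟨μ, hpos, hp ▸ hpΓ⟩

lemma entryC_conj_eq_zero_of_fixed {g k : SL2R} {e : ℝ} (hk : entryC k * e + entryD k = 0)
    (hg : entryA g * e + entryB g = e * (entryC g * e + entryD g)) :
    entryC (k * g * k⁻¹) = 0 := by
  simp only [entryA_inv, entryC_mul, entryC_inv, entryD_mul, eq_neg_of_add_eq_zero_right hk]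
  linear_combination -entryC k ^ 2 * hg

lemma trace_conj (g k : SL2R) :
    entryA (k * g * k⁻¹) + entryD (k * g * k⁻¹) = entryA g + entryD g := by
  simp only [entryA_mul, entryB_mul, entryC_mul, entryD_mul, entryA_inv, entryB_inv, entryC_inv,
    entryD_inv]
  linear_combination (entryA g + entryD g) * entry_det k

lemma entryA_neg (g : SL2R) : entryA (-g) = -entryA g := by simp [entryA]

lemma entryB_neg (g : SL2R) : entryB (-g) = -entryB g := by simp [entryB]

lemma entryC_neg (g : SL2R) : entryC (-g) = -entryC g := by simp [entryC]

lemma entryD_neg (g : SL2R) : entryD (-g) = -entryD g := by simp [entryD]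

lemma exists_eq_translation_or_eq_neg {h : SL2R} (hC : entryC h = 0)
    (htr : |entryA h + entryD h| = 2) : ∃ b, h = translation b ∨ h = -translation b := by
  have hdiag : ∀ s : ℝ, s ^ 2 = 1 → entryA h + entryD h = 2 * s → entryA h = s := by
    intro s hs htr
    have : (entryA h - s) ^ 2 = 0 := by
      linear_combination entryA h * htr - entry_det h + hs - entryB h * hC
    exact sub_eq_zero.1 (pow_eq_zero_iff two_ne_zero |>.1 this)
  rcases (abs_eq zero_le_two).1 htr with h2 | h2
  · have hA := hdiag 1 (by norm_num) (by linarith)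
    exact ⟨entryB h, .inl (SL2R_ext hA rfl hC (by rw [entryD_translation]; linarith))⟩
  · have hA := hdiag (-1) (by norm_num) (by linarith)
    refine ⟨-entryB h, .inr (SL2R_ext ?_ ?_ ?_ ?_)⟩ <;>
      simp only [entryA_neg, entryB_neg, entryC_neg, entryD_neg, entryA_translation,
        entryB_translation, entryC_translation, entryD_translation] <;>
      linarith

lemma IsCuspPointOf.hasCuspAtInfty_conj {G : Subgroup SL2R} {e : ℝ} (he : IsCuspPointOf G e)
    {k : SL2R} (hk : entryC k * e + entryD k = 0) :
    HasCuspAtInfty (G.map (MulAut.conj k).toMonoidHom) := by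
  obtain ⟨g, hg, ⟨htr, hg1, hgneg1⟩, hden, hfix⟩ := he
  have hmem : k * g * k⁻¹ ∈ G.map (MulAut.conj k).toMonoidHom := ⟨g, hg, rfl⟩
  have hC : entryC (k * g * k⁻¹) = 0 :=
    entryC_conj_eq_zero_of_fixed hk (by rwa [moebR, div_eq_iff hden] at hfix)
  obtain ⟨b, hb⟩ := exists_eq_translation_or_eq_neg hC (by rwa [trace_conj])
  have hsq : translation (b + b) = k * g * k⁻¹ * (k * g * k⁻¹) := by
    rcases hb with hb | hb <;> simp [hb, translation_add]
  refine ⟨b + b, fun h0 ↦ ?_, translation (b + b), rfl, hsq ▸ Subgroup.mul_mem _ hmem hmem⟩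
  obtain rfl : b = 0 := by linarith
  have hg : g = k⁻¹ * (k * g * k⁻¹) * k := by group
  rcases hb with hb | hb
  · exact hg1 (by rw [hg, hb, translation_zero]; simp)
  · exact hgneg1 (by rw [hg, hb, translation_zero]; simp)

/-! ### The gap at the cusp -/

/-- The image `g·∞ = a(g)/c(g)`; it has the junk value `0` when `g` fixes `∞`. -/
def cuspPt (g : SL2R) : ℝ := entryA g / entryC g

lemma entryC_inv_mul {g h : SL2R} (hg : entryC g ≠ 0) (hh : entryC h ≠ 0) :
    entryC (g⁻¹ * h) = entryC g * entryC h * (cuspPt g - cuspPt h) := by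
  rw [entryC_mul, entryC_inv, entryD_inv, cuspPt, cuspPt]
  field_simp
  ring

lemma abs_entryC_mul {g h : SL2R} (hg : entryC g ≠ 0) (hh : entryC h ≠ 0) :
    |entryC (g * h)| = |entryC g| * |entryC h| * |cuspPt g⁻¹ - cuspPt h| := by
  rw [← inv_inv g, entryC_inv_mul (entryC_inv_ne_zero hg) hh, abs_mul, abs_mul, entryC_inv, abs_neg,
    inv_inv]

lemma entryC_mul_ne_zero {g h : SL2R} (hg : entryC g ≠ 0) (hh : entryC h ≠ 0)
    (hne : cuspPt g⁻¹ ≠ cuspPt h) : entryC (g * h) ≠ 0 := by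
  have := sub_ne_zero.2 hne
  rw [← abs_pos, abs_entryC_mul hg hh]
  positivity

/-- `Γ` has a gap `κ` at `∞`: its elements either move `∞` and have lower left entry at least `κ`
in absolute value, or fix `∞` and act there as translations up to sign. -/
structure CuspGap (Γ : Subgroup SL2R) (κ : ℝ) : Prop where
  pos : 0 < κ
  le_abs_entryC : ∀ g ∈ Γ, entryC g ≠ 0 → κ ≤ |entryC g|
  abs_entryA_eq_one : ∀ g ∈ Γ, entryC g = 0 → |entryA g| = 1

lemma conj_translation {g : SL2R} (hg : entryC g = 0) (b : ℝ) :
    g * translation b * g⁻¹ = translation (entryA g ^ 2 * b) := by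
  have hdet := entry_det g
  rw [hg] at hdet
  apply SL2R_ext <;>
    simp only [entryA_mul, entryB_mul, entryC_mul, entryD_mul, entryA_inv, entryB_inv, entryC_inv,
      entryD_inv, entryA_translation, entryB_translation, entryC_translation, entryD_translation,
      hg]
  · linear_combination hdet
  · ring
  · ring
  · linear_combination hdet

lemma exists_int_abs_add_mul_le (x : ℝ) {y : ℝ} (hy : y ≠ 0) : ∃ j : ℤ, |x + j * y| ≤ |y| := by
  refine ⟨-round (x / y), ?_⟩
  have hxy : x + (-round (x / y) : ℤ) * y = (x / y - round (x / y)) * y := by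
    push_cast
    field_simp
    ring
  rw [hxy, abs_mul]
  exact mul_le_of_le_one_left (abs_nonneg y) ((abs_sub_round _).trans (by norm_num))

lemma mem_entryBall_of_near_one {h : SL2R} {μ : ℝ} (hμ : 0 ≤ μ) (hc : entryC h ≠ 0)
    (hc1 : |entryC h| ≤ 1) (hA : |entryA h - 1| ≤ μ * |entryC h|)
    (hD : |entryD h - 1| ≤ μ * |entryC h|) : h ∈ entryBall ((1 + μ) ^ 2) := by
  have hμc : μ * |entryC h| ≤ μ := mul_le_of_le_one_right hμ hc1
  have bA : |entryA h| ≤ 1 + μ := by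
    have := abs_sub_abs_le_abs_sub (entryA h) 1
    rw [abs_one] at this
    linarith
  have bD : |entryD h| ≤ 1 + μ := by
    have := abs_sub_abs_le_abs_sub (entryD h) 1
    rw [abs_one] at this
    linarith
  have bB : |entryB h| * |entryC h| ≤ μ * (2 + μ) * |entryC h| := by
    calc |entryB h| * |entryC h| = |(entryA h - 1) * entryD h + (entryD h - 1)| := by
          rw [← abs_mul]
          congr 1
          linear_combination -entry_det h
      _ ≤ |entryA h - 1| * |entryD h| + |entryD h - 1| :=
          (abs_add_le _ _).trans_eq (by rw [abs_mul])
      _ ≤ μ * |entryC h| * (1 + μ) + μ * |entryC h| := by gcongr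
      _ = μ * (2 + μ) * |entryC h| := by ring
  have bB := le_of_mul_le_mul_right bB (abs_pos.2 hc)
  refine mem_entryBall.2 ⟨⟨?_, ?_⟩, ?_, ?_⟩ <;> nlinarith

section Gap

variable {Γ : Subgroup SL2R} {μ : ℝ} (hμ : 0 < μ) (hμΓ : translation μ ∈ Γ)
include hμ hμΓ

lemma one_le_abs_entryA_of_entryC_eq_zero [DiscreteTopology Γ] {g : SL2R} (hg : g ∈ Γ)
    (hgC : entryC g = 0) : 1 ≤ |entryA g| := by
  by_contra! hlt
  have hA : entryA g ≠ 0 := fun h ↦ by simpa [h, hgC] using entry_det g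
  have hsq : entryA g ^ 2 < 1 := sq_lt_one_iff_abs_lt_one _ |>.2 hlt
  have hmem : ∀ n : ℕ, translation ((entryA g ^ 2) ^ n * μ) ∈ Γ := fun n ↦ by
    induction n with
    | zero => simpa using hμΓ
    | succ n ih =>
      rw [pow_succ', mul_assoc, ← conj_translation hgC]
      exact Γ.mul_mem (Γ.mul_mem hg ih) (Γ.inv_mem hg)
  have hinj : Function.Injective fun n : ℕ ↦ translation ((entryA g ^ 2) ^ n * μ) := by
    intro m n hmn
    have : (entryA g ^ 2) ^ m * μ = (entryA g ^ 2) ^ n * μ := congr_arg entryB hmn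
    exact (pow_right_strictAnti₀ (by positivity) hsq).injective (mul_right_cancel₀ hμ.ne' this)
  refine Set.infinite_of_injective_forall_mem hinj (fun n ↦ Set.mem_inter (hmem n) ?_)
    (finite_inter_entryBall Γ (max 1 μ))
  have hle : |(entryA g ^ 2) ^ n * μ| ≤ μ := by
    rw [abs_of_pos (by positivity)]
    exact mul_le_of_le_one_left hμ.le (pow_le_one₀ (by positivity) hsq.le)
  exact mem_entryBall.2 ⟨⟨by simp, hle.trans (le_max_right _ _)⟩, by simp, by simp⟩

lemma exists_mem_entryC_eq_near_one {g : SL2R} (hg : g ∈ Γ) (hc : entryC g ≠ 0) :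
    ∃ h ∈ Γ, entryC h = entryC g ∧ |entryA h - 1| ≤ μ * |entryC h| ∧
      |entryD h - 1| ≤ μ * |entryC h| := by
  have hne : μ * entryC g ≠ 0 := mul_ne_zero hμ.ne' hc
  obtain ⟨i, hi⟩ := exists_int_abs_add_mul_le (entryA g - 1) hne
  obtain ⟨j, hj⟩ := exists_int_abs_add_mul_le (entryD g - 1) hne
  have hC : entryC (translation (i * μ) * g * translation (j * μ)) = entryC g := by
    simp [entryC_mul, entryD_mul]
  rw [abs_mul, abs_of_pos hμ] at hi hj
  refine ⟨translation (i * μ) * g * translation (j * μ), Γ.mul_mem (Γ.mul_mem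
    (translation_zsmul_mem hμΓ i) hg) (translation_zsmul_mem hμΓ j), hC, ?_, ?_⟩ <;> rw [hC]
  · convert hi using 2
    simp only [entryA_mul, entryB_mul, entryA_translation, entryB_translation, entryC_translation]
    ring
  · convert hj using 2
    simp only [entryC_mul, entryD_mul, entryB_translation, entryC_translation, entryD_translation]
    ring

lemma exists_le_abs_entryC [DiscreteTopology Γ] :
    ∃ κ > 0, ∀ g ∈ Γ, entryC g ≠ 0 → κ ≤ |entryC g| := by
  have hfin := (finite_inter_entryBall Γ ((1 + μ) ^ 2)).subset
    (Set.inter_subset_left (t := {g | entryC g ≠ 0}))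
  obtain ⟨κ, hκ, hmin⟩ : ∃ κ > 0, ∀ g ∈ Γ, g ∈ entryBall ((1 + μ) ^ 2) → entryC g ≠ 0 →
      κ ≤ |entryC g| := by
    obtain hempty | hne := Set.eq_empty_or_nonempty
      ((Γ : Set SL2R) ∩ entryBall ((1 + μ) ^ 2) ∩ {g | entryC g ≠ 0})
    · refine ⟨1, one_pos, fun g hg hb hc ↦ (Set.eq_empty_iff_forall_notMem.1 hempty g ?_).elim⟩
      exact ⟨⟨hg, hb⟩, hc⟩
    · obtain ⟨g, ⟨-, hg⟩, hmin⟩ := Set.exists_min_image _ (fun g ↦ |entryC g|) hfin hne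
      exact ⟨|entryC g|, abs_pos.2 hg, fun h hh hb hc ↦ hmin h ⟨⟨hh, hb⟩, hc⟩⟩
  refine ⟨min κ 1, lt_min hκ one_pos, fun g hg hc ↦ ?_⟩
  obtain hc1 | hc1 := le_total 1 |entryC g|
  · exact (min_le_right _ _).trans hc1
  · obtain ⟨h, hh, hC, hA, hD⟩ := exists_mem_entryC_eq_near_one hμ hμΓ hg hc
    rw [← hC] at hc hc1 ⊢
    exact (min_le_left _ _).trans (hmin h hh (mem_entryBall_of_near_one hμ.le hc hc1 hA hD) hc)

lemma exists_cuspGap [DiscreteTopology Γ] : ∃ κ, CuspGap Γ κ := by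
  obtain ⟨κ, hκ, hgap⟩ := exists_le_abs_entryC hμ hμΓ
  refine ⟨κ, hκ, hgap, fun g hg hc ↦ ?_⟩
  have hA := one_le_abs_entryA_of_entryC_eq_zero hμ hμΓ hg hc
  have hD := one_le_abs_entryA_of_entryC_eq_zero hμ hμΓ (Γ.inv_mem hg)
    (by rw [entryC_inv, hc, neg_zero])
  rw [entryA_inv] at hD
  have hAD : |entryA g| * |entryD g| = 1 := by
    rw [← abs_mul, show entryA g * entryD g = 1 by simpa [hc] using entry_det g, abs_one]
  nlinarith

end Gap

namespace CuspGap

variable {Γ : Subgroup SL2R} {κ : ℝ} (hΓ : CuspGap Γ κ)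
include hΓ

lemma le_mul_abs_cuspPt_sub {g h : SL2R} (hg : g ∈ Γ) (hh : h ∈ Γ) (cg : entryC g ≠ 0)
    (ch : entryC h ≠ 0) (hne : cuspPt g ≠ cuspPt h) :
    κ ≤ |entryC g| * |entryC h| * |cuspPt g - cuspPt h| := by
  rw [← abs_mul, ← abs_mul, ← entryC_inv_mul cg ch]
  refine hΓ.le_abs_entryC _ (Γ.mul_mem (Γ.inv_mem hg) hh) ?_
  rw [entryC_inv_mul cg ch]
  exact mul_ne_zero (mul_ne_zero cg ch) (sub_ne_zero.2 hne)

lemma abs_entryC_eq_of_cuspPt_eq {g h : SL2R} (hg : g ∈ Γ) (hh : h ∈ Γ) (cg : entryC g ≠ 0)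
    (ch : entryC h ≠ 0) (hgh : cuspPt g = cuspPt h) : |entryC g| = |entryC h| := by
  have hstab : entryC (g⁻¹ * h) = 0 := by rw [entryC_inv_mul cg ch, hgh, sub_self, mul_zero]
  have hA := hΓ.abs_entryA_eq_one _ (Γ.mul_mem (Γ.inv_mem hg) hh) hstab
  have hC : entryC h = entryC g * entryA (g⁻¹ * h) := by
    rw [← mul_inv_cancel_left g h, entryC_mul, mul_inv_cancel_left, hstab, mul_zero, add_zero]
  rw [hC, abs_mul, hA, mul_one]

end CuspGap

/-! ### Finite area and the density of cusps -/

section FiniteReturns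

variable {G X : Type*} [Group G] [MulAction G X] {B : Set X}

lemma encard_setOf_inv_smul_mem_le (B : Set X) (w : X) :
    {g : G | g⁻¹ • w ∈ B}.encard ≤ {g : G | ∃ x ∈ B, g • x ∈ B}.encard := by
  obtain hempty | ⟨g₀, hg₀⟩ := {g : G | g⁻¹ • w ∈ B}.eq_empty_or_nonempty
  · simp [hempty]
  refine Set.encard_le_encard_of_injOn (f := fun g ↦ g⁻¹ * g₀) (fun g hg ↦ ?_) fun g _ h _ hgh ↦ ?_
  · exact ⟨g₀⁻¹ • w, hg₀, by simpa [mul_smul] using hg⟩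
  · simpa using hgh

variable [MeasurableSpace X] [MeasurableConstSMul G X] {μ : Measure X} [SMulInvariantMeasure G X μ]

lemma measure_preimage_smul_inter (g : G) (F : Set X) (hB : MeasurableSet B) :
    μ ((g • ·) ⁻¹' F ∩ B) = ∫⁻ w in F, {h : G | h⁻¹ • w ∈ B}.indicator 1 g ∂μ := by
  have hBg : MeasurableSet ((g⁻¹ • ·) ⁻¹' B) := measurable_const_smul g⁻¹ hB
  calc μ ((g • ·) ⁻¹' F ∩ B) = μ ((g⁻¹ • ·) ⁻¹' ((g • ·) ⁻¹' F ∩ B)) :=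
        (measure_preimage_smul μ g⁻¹ _).symm
    _ = μ ((g⁻¹ • ·) ⁻¹' B ∩ F) := by
        congr 1
        ext w
        simp [and_comm]
    _ = ∫⁻ w in F, ((g⁻¹ • ·) ⁻¹' B).indicator 1 w ∂μ := by
        rw [lintegral_indicator_one hBg, Measure.restrict_apply hBg]
    _ = ∫⁻ w in F, {h : G | h⁻¹ • w ∈ B}.indicator 1 g ∂μ := rfl

lemma measure_ne_top_of_finite_returns [Countable G] {F : Set X} (hF : μ F ≠ ⊤)
    (hcover : ∀ x, ∃ g : G, g • x ∈ F) (hB : MeasurableSet B)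
    (hreturns : {g : G | ∃ x ∈ B, g • x ∈ B}.Finite) : μ B ≠ ⊤ := by
  refine ne_top_of_le_ne_top (ENNReal.mul_ne_top (ENat.toENNReal_ne_top.2
    hreturns.encard_lt_top.ne) hF) ?_
  have hsub : B ⊆ ⋃ g : G, (g • ·) ⁻¹' F ∩ B := fun x hx ↦
    Set.mem_iUnion.2 ((hcover x).imp fun _ hg ↦ ⟨hg, hx⟩)
  calc μ B ≤ ∑' g : G, μ ((g • ·) ⁻¹' F ∩ B) := (measure_mono hsub).trans (measure_iUnion_le _)
    _ = ∑' g : G, ∫⁻ w in F, {h : G | h⁻¹ • w ∈ B}.indicator 1 g ∂μ :=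
        tsum_congr fun g ↦ measure_preimage_smul_inter g F hB
    _ = ∫⁻ w in F, ∑' g : G, {h : G | h⁻¹ • w ∈ B}.indicator 1 g ∂μ :=
        (lintegral_tsum fun g ↦
          (measurable_one.indicator (measurable_const_smul g⁻¹ hB)).aemeasurable).symm
    _ ≤ ∫⁻ _ in F, ({g : G | ∃ x ∈ B, g • x ∈ B}.encard : ℝ≥0∞) ∂μ := by
        refine lintegral_mono fun w ↦ ?_
        rw [← tsum_subtype]
        refine (ENNReal.tsum_set_one _).trans_le ?_
        exact ENat.toENNReal_le.2 (encard_setOf_inv_smul_mem_le B w)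
    _ = {g : G | ∃ x ∈ B, g • x ∈ B}.encard * μ F := setLIntegral_const _ _

end FiniteReturns

lemma coe_smul_eq_moeb (g : SL2R) (z : UpperHalfPlane) :
    ((g • z : UpperHalfPlane) : ℂ) = moeb g z :=
  UpperHalfPlane.coe_specialLinearGroup_apply g z

instance : SMulInvariantMeasure SL2R UpperHalfPlane volume :=
  ⟨fun g s _ ↦ measure_preimage_smul volume (Matrix.SpecialLinearGroup.mapGL ℝ g) s⟩

lemma volume_eq_hypArea_image (s : Set UpperHalfPlane) : volume s = hypArea ((↑) '' s) := by
  rw [UpperHalfPlane.volume_eq_lintegral, hypArea]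
  refine lintegral_congr fun z ↦ ?_
  rw [ENNReal.ofReal, ENNReal.coe_inj]
  ext
  rw [Real.coe_toNNReal _ (by positivity)]
  simp

/-- Some set of finite hyperbolic area meets every `Γ`-orbit in the upper half-plane. -/
def HasFiniteAreaCover (Γ : Subgroup SL2R) : Prop :=
  ∃ F : Set UpperHalfPlane, volume F ≠ ⊤ ∧ ∀ z, ∃ g : Γ, g • z ∈ F

lemma IsNonUniformLattice.hasFiniteAreaCover {G : Subgroup SL2R} (hG : IsNonUniformLattice G) :
    HasFiniteAreaCover G := by
  obtain ⟨-, ⟨F, ⟨-, -, hcover, -⟩, hF⟩, -⟩ := hG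
  refine ⟨(↑) ⁻¹' F, ?_, fun z ↦ ?_⟩
  · rw [volume_eq_hypArea_image]
    exact ((lintegral_mono_set (Set.image_preimage_subset _ _)).trans_lt hF).ne
  · obtain ⟨g, hg, hgz⟩ := hcover z z.im_pos
    rw [← coe_smul_eq_moeb] at hgz
    exact ⟨⟨g, hg⟩, hgz⟩

lemma HasFiniteAreaCover.map_conj {G : Subgroup SL2R} (hG : HasFiniteAreaCover G) (k : SL2R) :
    HasFiniteAreaCover (G.map (MulAut.conj k).toMonoidHom) := by
  obtain ⟨F, hF, hcover⟩ := hG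
  refine ⟨(k⁻¹ • ·) ⁻¹' F, by rwa [measure_preimage_smul], fun z ↦ ?_⟩
  obtain ⟨g, hg⟩ := hcover (k⁻¹ • z)
  refine ⟨⟨k * g * k⁻¹, g, g.2, rfl⟩, ?_⟩
  change k⁻¹ • (k * g * k⁻¹) • z ∈ F
  rwa [mul_assoc, mul_smul, inv_smul_smul, mul_smul]

lemma volume_reProdIm (s t : Set ℝ) : volume (s ×ℂ t) = volume s * volume t := by
  have h := Complex.volume_preserving_equiv_real_prod.measure_preimage_equiv (s ×ˢ t)
  rwa [Measure.volume_eq_prod, Measure.prod_prod] at h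

lemma ofReal_div_le_hypArea_box {a b ε : ℝ} (hab : a ≤ b) (hε : 0 < ε) :
    ENNReal.ofReal ((b - a) / (4 * ε)) ≤ hypArea (Set.Ioo a b ×ℂ Set.Ioo ε (2 * ε)) := by
  have hmeas : MeasurableSet (Set.Ioo a b ×ℂ Set.Ioo ε (2 * ε)) :=
    (isOpen_Ioo.reProdIm isOpen_Ioo).measurableSet
  calc ENNReal.ofReal ((b - a) / (4 * ε))
      = ENNReal.ofReal (1 / (2 * ε) ^ 2) * volume (Set.Ioo a b ×ℂ Set.Ioo ε (2 * ε)) := by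
        rw [volume_reProdIm, Real.volume_Ioo, Real.volume_Ioo,
          ← ENNReal.ofReal_mul (sub_nonneg.2 hab), ← ENNReal.ofReal_mul (by positivity)]
        congr 1
        field_simp
        ring
    _ = ∫⁻ _ in Set.Ioo a b ×ℂ Set.Ioo ε (2 * ε), ENNReal.ofReal (1 / (2 * ε) ^ 2) :=
        (setLIntegral_const _ _).symm
    _ ≤ hypArea (Set.Ioo a b ×ℂ Set.Ioo ε (2 * ε)) := by
        refine setLIntegral_mono' hmeas fun z hz ↦ ENNReal.ofReal_le_ofReal ?_
        have him : 0 < z.im := hε.trans hz.2.1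
        have : z.im ≤ 2 * ε := hz.2.2.le
        gcongr

lemma volume_halfDisc_eq_top (ξ : ℝ) {ρ : ℝ} (hρ : 0 < ρ) :
    volume {z : UpperHalfPlane | ‖(z : ℂ) - ξ‖ < ρ} = ⊤ := by
  rw [volume_eq_hypArea_image]
  have hbox : ∀ ε ∈ Set.Ioo 0 (ρ / 4), ENNReal.ofReal (ρ / 8 * ε⁻¹) ≤
      hypArea ((↑) '' {z : UpperHalfPlane | ‖(z : ℂ) - ξ‖ < ρ}) := by
    rintro ε ⟨hε, hερ⟩
    have hsub : Set.Ioo ξ (ξ + ρ / 2) ×ℂ Set.Ioo ε (2 * ε) ⊆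
        (↑) '' {z : UpperHalfPlane | ‖(z : ℂ) - ξ‖ < ρ} := by
      rintro z ⟨⟨hre, hre'⟩, him, him'⟩
      refine ⟨⟨z, hε.trans him⟩, (Complex.norm_le_abs_re_add_abs_im _).trans_lt ?_, rfl⟩
      simp only [Complex.sub_re, Complex.ofReal_re, Complex.sub_im, Complex.ofReal_im, sub_zero]
      rw [abs_of_pos (by linarith), abs_of_pos (by linarith)]
      linarith
    refine le_trans (le_of_eq ?_) ((ofReal_div_le_hypArea_box (by linarith) hε).trans
      (lintegral_mono_set hsub))
    congr 1
    field_simp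
    ring
  have hlim : Filter.Tendsto (fun ε : ℝ ↦ ENNReal.ofReal (ρ / 8 * ε⁻¹)) (nhdsWithin 0 (Set.Ioi 0))
      (nhds ⊤) :=
    ENNReal.tendsto_ofReal_atTop.comp (tendsto_inv_nhdsGT_zero.const_mul_atTop (by positivity))
  exact top_le_iff.1 (le_of_tendsto hlim
    (Filter.eventually_of_mem (Ioo_mem_nhdsGT (by positivity)) hbox))

lemma moeb_sub_mul_sub_cuspPt {g : SL2R} (hc : entryC g ≠ 0) (z : UpperHalfPlane) :
    (entryC g : ℂ) ^ 2 * ((moeb g z - cuspPt g) * (z - cuspPt g⁻¹)) = -1 := by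
  have hc' : (entryC g : ℂ) ≠ 0 := by exact_mod_cast hc
  have hdet : (entryA g : ℂ) * entryD g - entryB g * entryC g = 1 := by exact_mod_cast entry_det g
  have hden : (entryC g : ℂ) * z + entryD g ≠ 0 := UpperHalfPlane.denom_ne_zero g z
  rw [moeb, cuspPt, cuspPt, entryA_inv, entryC_inv]
  push_cast
  field_simp
  linear_combination -(entryC g * z + entryD g : ℂ) * hdet

lemma sq_mul_norm_moeb_sub_mul_norm_sub {g : SL2R} (hc : entryC g ≠ 0) (z : UpperHalfPlane) :
    |entryC g| ^ 2 * (‖moeb g z - cuspPt g‖ * ‖(z : ℂ) - cuspPt g⁻¹‖) = 1 := by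
  simpa using congr_arg norm (moeb_sub_mul_sub_cuspPt hc z)

lemma moeb_eq_add_of_entryC_eq_zero {g : SL2R} (hc : entryC g = 0) (ha : |entryA g| = 1) (z : ℂ) :
    moeb g z = z + (entryA g * entryB g : ℝ) := by
  have hsq : entryA g ^ 2 = 1 := by rw [← sq_abs, ha, one_pow]
  have hD : entryD g = entryA g := by
    linear_combination entryA g * entry_det g - entryD g * hsq + entryA g * entryB g * hc
  have hA : (entryA g : ℂ) ≠ 0 := by
    intro h
    simp [Complex.ofReal_eq_zero.1 h] at ha
  have hsq' : (entryA g : ℂ) ^ 2 = 1 := by exact_mod_cast hsq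
  rw [moeb, hc, hD]
  push_cast
  rw [zero_mul, zero_add, div_eq_iff hA]
  linear_combination -entryB g * hsq'

lemma mem_entryBall_of_entryC_eq_zero {g : SL2R} (hc : entryC g = 0) (ha : |entryA g| = 1)
    {z : ℂ} {M : ℝ} (hz : ‖z‖ ≤ M) (hgz : ‖moeb g z‖ ≤ M) : g ∈ entryBall (1 + 2 * M) := by
  have hM : 0 ≤ M := (norm_nonneg _).trans hz
  have hd : |entryD g| = 1 := by
    have := congr_arg abs (entry_det g)
    rwa [hc, mul_zero, sub_zero, abs_mul, ha, one_mul, abs_one] at this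
  have hb : |entryB g| ≤ 2 * M := by
    calc |entryB g| = ‖moeb g z - z‖ := by
          rw [moeb_eq_add_of_entryC_eq_zero hc ha, add_sub_cancel_left, Complex.norm_real,
            Real.norm_eq_abs, abs_mul, ha, one_mul]
      _ ≤ ‖moeb g z‖ + ‖z‖ := norm_sub_le _ _
      _ ≤ 2 * M := by linarith
  exact mem_entryBall.2 ⟨⟨by linarith, by linarith⟩, by rw [hc, abs_zero]; linarith, by linarith⟩

lemma abs_entryA_le_of_mul_eq_one {g : SL2R} {w : ℂ} {κ ρ M Y : ℝ} (hκ : 0 < κ) (hρ : 0 < ρ)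
    (hc : κ ≤ |entryC g|) (hcρ : |entryC g| ≤ 1 / ρ) (hw : ‖w‖ ≤ M) (hY : ρ ≤ Y)
    (hXY : |entryC g| ^ 2 * (‖w - cuspPt g‖ * Y) = 1) : |entryA g| ≤ (M + 1 / κ) / ρ := by
  have hc0 : entryC g ≠ 0 := abs_pos.1 (hκ.trans_le hc)
  have hX : |entryC g| * ‖w - cuspPt g‖ ≤ 1 / (κ * ρ) := by
    rw [le_div_iff₀ (by positivity), ← hXY]
    calc |entryC g| * ‖w - cuspPt g‖ * (κ * ρ)
        ≤ |entryC g| * ‖w - cuspPt g‖ * (|entryC g| * Y) := by gcongr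
      _ = |entryC g| ^ 2 * (‖w - cuspPt g‖ * Y) := by ring
  have hpt : |cuspPt g| ≤ M + ‖w - cuspPt g‖ := by
    calc |cuspPt g| = ‖w - (w - cuspPt g)‖ := by
          rw [sub_sub_cancel, Complex.norm_real, Real.norm_eq_abs]
      _ ≤ M + ‖w - cuspPt g‖ := (norm_sub_le _ _).trans (by gcongr)
  have hM : 0 ≤ M := (norm_nonneg w).trans hw
  calc |entryA g| = |entryC g| * |cuspPt g| := by
        rw [← abs_mul, cuspPt, mul_div_cancel₀ _ hc0]
    _ ≤ |entryC g| * M + |entryC g| * ‖w - cuspPt g‖ := by rw [← mul_add]; gcongr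
    _ ≤ 1 / ρ * M + 1 / (κ * ρ) := by gcongr
    _ = (M + 1 / κ) / ρ := by field_simp

lemma mem_entryBall_of_le_norm_sub_cuspPt {g : SL2R} {z : UpperHalfPlane} {κ ρ M : ℝ} (hκ : 0 < κ)
    (hρ : 0 < ρ) (hc : κ ≤ |entryC g|) (hz : ‖(z : ℂ)‖ ≤ M) (hgz : ‖moeb g z‖ ≤ M)
    (hX : ρ ≤ ‖moeb g z - cuspPt g‖) (hY : ρ ≤ ‖(z : ℂ) - cuspPt g⁻¹‖) :
    g ∈ entryBall (1 / ρ + (M + 1 / κ) / ρ + (((M + 1 / κ) / ρ) ^ 2 + 1) / κ) := by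
  have hXY := sq_mul_norm_moeb_sub_mul_norm_sub (abs_pos.1 (hκ.trans_le hc)) z
  have hM : 0 ≤ M := (norm_nonneg _).trans hz
  have bC : |entryC g| ≤ 1 / ρ := by
    rw [le_div_iff₀ hρ]
    refine le_of_sq_le_sq ?_ zero_le_one
    calc (|entryC g| * ρ) ^ 2 = |entryC g| ^ 2 * (ρ * ρ) := by ring
      _ ≤ |entryC g| ^ 2 * (‖moeb g z - cuspPt g‖ * ‖(z : ℂ) - cuspPt g⁻¹‖) := by gcongr
      _ = 1 ^ 2 := by rw [hXY, one_pow]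
  have bA := abs_entryA_le_of_mul_eq_one hκ hρ hc bC hgz hY hXY
  have bD : |entryD g| ≤ (M + 1 / κ) / ρ := by
    have := abs_entryA_le_of_mul_eq_one (g := g⁻¹) hκ hρ (w := z) (M := M) (Y := _)
      (by rwa [entryC_inv, abs_neg]) (by rwa [entryC_inv, abs_neg]) hz hX
      (by rw [entryC_inv, abs_neg, mul_comm ‖_‖, hXY])
    rwa [entryA_inv] at this
  set A := (M + 1 / κ) / ρ
  have bB : |entryB g| ≤ (A ^ 2 + 1) / κ := by
    rw [le_div_iff₀ hκ]
    calc |entryB g| * κ ≤ |entryB g| * |entryC g| := by gcongr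
      _ = |entryA g * entryD g - 1| := by
          rw [← abs_mul]
          congr 1
          linear_combination -entry_det g
      _ ≤ |entryA g| * |entryD g| + 1 := (abs_sub _ _).trans_eq (by rw [abs_mul, abs_one])
      _ ≤ A * A + 1 := by gcongr
      _ = A ^ 2 + 1 := by ring
  have hA : 0 ≤ A := by positivity
  have : 0 < 1 / ρ := by positivity
  have : 0 < (A ^ 2 + 1) / κ := by positivity
  exact mem_entryBall.2 ⟨⟨by linarith, by linarith⟩, by linarith, by linarith⟩

lemma le_norm_sub_cuspPt {g : SL2R} {w : ℂ} {ξ ρ : ℝ} (hw : ‖w - ξ‖ < ρ)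
    (hg : 2 * ρ ≤ |cuspPt g - ξ|) : ρ ≤ ‖w - cuspPt g‖ := by
  have hpt : |cuspPt g - ξ| = ‖(w - ξ) - (w - cuspPt g)‖ := by
    rw [sub_sub_sub_cancel_left, ← Complex.ofReal_sub, Complex.norm_real, Real.norm_eq_abs]
  linarith [norm_sub_le (w - ξ : ℂ) (w - cuspPt g)]

-- A half-disc around `ξ` without nearby cusps would meet only finitely many of its translates, so
-- its area would be finite.
lemma CuspGap.exists_abs_cuspPt_sub_lt {Γ : Subgroup SL2R} [DiscreteTopology Γ] {κ : ℝ}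
    (hΓ : CuspGap Γ κ) (hcover : HasFiniteAreaCover Γ) (ξ : ℝ) {ε : ℝ} (hε : 0 < ε) :
    ∃ g ∈ Γ, entryC g ≠ 0 ∧ |cuspPt g - ξ| < ε := by
  by_contra! hno
  obtain ⟨ρ, rfl⟩ : ∃ ρ, ε = 2 * ρ := ⟨ε / 2, by ring⟩
  have hρ : 0 < ρ := by linarith
  obtain ⟨F, hF, hcover⟩ := hcover
  have := countable_of_discreteTopology Γ
  have hmeas : MeasurableSet {z : UpperHalfPlane | ‖(z : ℂ) - ξ‖ < ρ} :=
    measurableSet_lt (UpperHalfPlane.measurable_coe.sub_const _).norm measurable_const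
  refine measure_ne_top_of_finite_returns hF hcover hmeas ?_ (volume_halfDisc_eq_top ξ hρ)
  have hM : ∀ w : ℂ, ‖w - ξ‖ < ρ → ‖w‖ ≤ |ξ| + ρ := fun w hw ↦ by
    have := norm_sub_norm_le w ξ
    rw [Complex.norm_real, Real.norm_eq_abs] at this
    linarith
  set M := |ξ| + ρ
  refine Set.Finite.of_finite_image (f := Subtype.val)
    (((finite_inter_entryBall Γ (1 + 2 * M)).union (finite_inter_entryBall Γ
      (1 / ρ + (M + 1 / κ) / ρ + (((M + 1 / κ) / ρ) ^ 2 + 1) / κ))).subset ?_)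
    Subtype.val_injective.injOn
  rintro _ ⟨⟨g, hg⟩, ⟨z, hz, hgz⟩, rfl⟩
  have hgz : ‖moeb g z - ξ‖ < ρ := by rwa [← coe_smul_eq_moeb]
  obtain hc | hc := eq_or_ne (entryC g) 0
  · exact .inl ⟨hg, mem_entryBall_of_entryC_eq_zero hc (hΓ.abs_entryA_eq_one g hg hc) (hM _ hz)
      (hM _ hgz)⟩
  · have hinv := hno g⁻¹ (Γ.inv_mem hg) (entryC_inv_ne_zero hc)
    exact .inr ⟨hg, mem_entryBall_of_le_norm_sub_cuspPt hΓ.pos hρ (hΓ.le_abs_entryC g hg hc)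
      (hM _ hz) (hM _ hgz) (le_norm_sub_cuspPt hgz (hno g hg hc)) (le_norm_sub_cuspPt hz hinv)⟩

/-! ### Badly approximable cusps -/

lemma exists_third_Icc_le_abs_sub {P : Set ℝ} {ℓ : ℝ} (hℓ : 0 < ℓ)
    (hP : P.Pairwise fun p q ↦ 2 * ℓ < |p - q|) (a : ℝ) :
    ∃ a', a ≤ a' ∧ a' + ℓ / 3 ≤ a + ℓ ∧
      ∀ z ∈ Set.Icc a' (a' + ℓ / 3), ∀ p ∈ P, ℓ / 6 ≤ |z - p| := by
  by_cases hnear : ∃ p ∈ P, ∃ z ∈ Set.Icc a (a + ℓ), |z - p| < ℓ / 6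
  · obtain ⟨p, hp, z, ⟨hz₁, hz₂⟩, hzp⟩ := hnear
    have hother : ∀ q ∈ P, q ≠ p → ∀ w ∈ Set.Icc a (a + ℓ), ℓ / 6 ≤ |w - q| := by
      rintro q hq hqp w ⟨hw₁, hw₂⟩
      have hzw : |z - w| ≤ ℓ := abs_le.2 ⟨by linarith, by linarith⟩
      have hpq : |q - p| ≤ |q - z| + |z - p| := abs_sub_le _ _ _
      have hqz : |q - z| ≤ |q - w| + |w - z| := abs_sub_le _ _ _
      rw [abs_sub_comm q w, abs_sub_comm w z] at hqz
      linarith [hP hq hp hqp]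
    obtain hpa | hpa := le_total p (a + ℓ / 2)
    · refine ⟨a + 2 * ℓ / 3, by linarith, by linarith, fun w hw q hq ↦ ?_⟩
      obtain rfl | hqp := eq_or_ne q p
      · exact le_abs.2 (.inl (by linarith [hw.1]))
      · exact hother q hq hqp w ⟨by linarith [hw.1], by linarith [hw.2]⟩
    · refine ⟨a, le_rfl, by linarith, fun w hw q hq ↦ ?_⟩
      obtain rfl | hqp := eq_or_ne q p
      · exact le_abs.2 (.inr (by linarith [hw.2]))
      · exact hother q hq hqp w ⟨hw.1, by linarith [hw.2]⟩
  · push Not at hnear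
    exact ⟨a, le_rfl, by linarith, fun z hz p hp ↦ hnear p hp z ⟨hz.1, by linarith [hz.2]⟩⟩

lemma exists_forall_le_abs_sub {P : ℕ → Set ℝ} {ℓ : ℝ} (hℓ : 0 < ℓ)
    (hP : ∀ n, (P n).Pairwise fun p q ↦ 2 * (ℓ / 3 ^ n) < |p - q|) :
    ∃ x, ∀ n, ∀ p ∈ P n, ℓ / 3 ^ n / 6 ≤ |x - p| := by
  have step (n : ℕ) (a : ℝ) := exists_third_Icc_le_abs_sub (by positivity) (hP n) a
  choose next le_next next_add_le far using step
  have hthird : ∀ n, ℓ / 3 ^ (n + 1) = ℓ / 3 ^ n / 3 := fun n ↦ by rw [pow_succ, div_div]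
  let a : ℕ → ℝ := Nat.rec 0 next
  have hmono : Monotone a := monotone_nat_of_le_succ fun n ↦ le_next n (a n)
  have hanti : Antitone fun n ↦ a n + ℓ / 3 ^ n :=
    antitone_nat_of_succ_le fun n ↦ (hthird n ▸ next_add_le n (a n) :)
  have hx := Set.mem_iInter.1 (hmono.ciSup_mem_iInter_Icc_of_antitone hanti
    fun n ↦ le_add_of_nonneg_right (by positivity))
  exact ⟨⨆ n, a n, fun n ↦ far n (a n) _ (hthird n ▸ hx (n + 1) :)⟩

/-- `x` is badly approximable by the orbit `Γ·∞`, with constant `η`. -/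
def BadlyApproximable (Γ : Subgroup SL2R) (η x : ℝ) : Prop :=
  ∀ g ∈ Γ, entryC g ≠ 0 → η / entryC g ^ 2 ≤ |x - cuspPt g|

lemma CuspGap.pairwise_cuspPt_sub {Γ : Subgroup SL2R} {κ : ℝ} (hΓ : CuspGap Γ κ) (N s : ℝ) :
    {p | ∃ g ∈ Γ, entryC g ≠ 0 ∧ entryC g ^ 2 < N ∧ cuspPt g - s = p}.Pairwise
      fun p q ↦ κ / N < |p - q| := by
  rintro _ ⟨g, hg, cg, hgN, rfl⟩ _ ⟨h, hh, ch, hhN, rfl⟩ hne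
  have hne' : cuspPt g ≠ cuspPt h := fun h ↦ hne (by rw [h])
  have hN : 0 < N := (sq_nonneg _).trans_lt hgN
  have hcc : |entryC g| * |entryC h| < N := by
    rw [← sq_abs] at hgN hhN
    nlinarith [sq_nonneg (|entryC g| - |entryC h|)]
  rw [sub_sub_sub_cancel_right, div_lt_iff₀' hN]
  exact (hΓ.le_mul_abs_cuspPt_sub hg hh cg ch hne').trans_lt
    (mul_lt_mul_of_pos_right hcc (abs_pos.2 (sub_ne_zero.2 hne')))

lemma CuspGap.exists_three_pow_near {Γ : Subgroup SL2R} {κ : ℝ} (hΓ : CuspGap Γ κ) {g : SL2R}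
    (hg : g ∈ Γ) (hc : entryC g ≠ 0) :
    ∃ m : ℕ, κ ^ 2 * 3 ^ (2 * m) ≤ entryC g ^ 2 ∧ entryC g ^ 2 < κ ^ 2 * 3 ^ (2 * m + 2) := by
  have hκ := hΓ.pos
  have hκc : κ ^ 2 ≤ entryC g ^ 2 := by
    rw [← sq_abs (entryC g)]
    exact pow_le_pow_left₀ hκ.le (hΓ.le_abs_entryC g hg hc) 2
  obtain ⟨m, hm, hm'⟩ := exists_nat_pow_near (x := entryC g ^ 2 / κ ^ 2) (y := 3 ^ 2)
    ((one_le_div (by positivity)).2 hκc) (by norm_num)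
  rw [← pow_mul, le_div_iff₀' (by positivity)] at hm
  rw [← pow_mul, div_lt_iff₀' (by positivity)] at hm'
  exact ⟨m, hm, hm'⟩

-- Nested thirds avoid the cusps with `c ^ 2` about `9 ^ m`, alternately around `x` and `x + t`.
lemma CuspGap.exists_badlyApproximable_pair {Γ : Subgroup SL2R} {κ : ℝ} (hΓ : CuspGap Γ κ)
    (t : ℝ) : ∃ x, BadlyApproximable Γ (κ / 324) x ∧ BadlyApproximable Γ (κ / 324) (x + t) := by
  have hκ := hΓ.pos
  let shift : ℕ → ℝ := fun n ↦ if Even n then 0 else t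
  obtain ⟨x, hx⟩ := exists_forall_le_abs_sub (ℓ := 1 / (18 * κ)) (by positivity)
    (P := fun n ↦ {p | ∃ g ∈ Γ, entryC g ≠ 0 ∧ entryC g ^ 2 < κ ^ 2 * 3 ^ (n + 2) ∧
      cuspPt g - shift n = p}) fun n ↦ by
    convert hΓ.pairwise_cuspPt_sub (κ ^ 2 * 3 ^ (n + 2)) (shift n) using 4
    field_simp
    ring
  have far : ∀ n, ∀ g ∈ Γ, entryC g ≠ 0 → κ ^ 2 * 3 ^ n ≤ 3 * entryC g ^ 2 →
      entryC g ^ 2 < κ ^ 2 * 3 ^ (n + 2) →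
      κ / 324 / entryC g ^ 2 ≤ |x - (cuspPt g - shift n)| := by
    intro n g hg hc hle hlt
    refine le_trans ?_ (hx n _ ⟨g, hg, hc, hlt, rfl⟩)
    calc κ / 324 / entryC g ^ 2 = κ / 108 / (3 * entryC g ^ 2) := by field_simp; norm_num
      _ ≤ κ / 108 / (κ ^ 2 * 3 ^ n) := by gcongr
      _ = 1 / (18 * κ) / 3 ^ n / 6 := by field_simp; norm_num
  refine ⟨x, fun g hg hc ↦ ?_, fun g hg hc ↦ ?_⟩ <;>
    obtain ⟨m, hm, hm'⟩ := hΓ.exists_three_pow_near hg hc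
  · have := far (2 * m) g hg hc (by linarith [sq_nonneg (entryC g)]) hm'
    simpa only [shift, even_two_mul, if_true, sub_zero] using this
  · have := far (2 * m + 1) g hg hc (by rw [pow_succ (3 : ℝ)]; linarith)
      (hm'.trans_le (by gcongr <;> norm_num))
    rwa [show shift (2 * m + 1) = t by simp [shift], sub_sub_eq_add_sub] at this

/-- `g·∞` is a point of the orbit `Γ·∞` which is badly approximable, with constant `δ`, by the
other points of that orbit. -/
structure BadCusp (Γ : Subgroup SL2R) (δ : ℝ) (g : SL2R) : Prop where
  mem : g ∈ Γ
  entryC_ne_zero : entryC g ≠ 0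
  le_abs_sub : ∀ h ∈ Γ, entryC h ≠ 0 → cuspPt h ≠ cuspPt g →
    δ / entryC h ^ 2 ≤ |cuspPt g - cuspPt h|

namespace CuspGap

variable {Γ : Subgroup SL2R} {κ δ : ℝ} (hΓ : CuspGap Γ κ) (hδκ : 2 * δ ≤ κ)
include hΓ hδκ

lemma two_mul_abs_entryC_le {u h : SL2R} (hu : u ∈ Γ) (hh : h ∈ Γ) (cu : entryC u ≠ 0)
    (ch : entryC h ≠ 0) (hne : cuspPt u ≠ cuspPt h)
    (hlt : |cuspPt u - cuspPt h| < δ / entryC h ^ 2) : 2 * |entryC h| ≤ |entryC u| := by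
  have hcu : 0 < |entryC u| := abs_pos.2 cu
  have hch : 0 < |entryC h| := abs_pos.2 ch
  rw [lt_div_iff₀ (by positivity), ← sq_abs] at hlt
  have hle : κ * (2 * |entryC h|) ≤ κ * |entryC u| := by
    calc κ * (2 * |entryC h|)
        ≤ |entryC u| * |entryC h| * |cuspPt u - cuspPt h| * (2 * |entryC h|) := by
          gcongr
          exact hΓ.le_mul_abs_cuspPt_sub hu hh cu ch hne
      _ = 2 * (|cuspPt u - cuspPt h| * |entryC h| ^ 2) * |entryC u| := by ring
      _ ≤ κ * |entryC u| := by gcongr; linarith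
  exact le_of_mul_le_mul_left hle hΓ.pos

-- Among the cusps this close to `v·∞`, one whose height is minimal up to a factor `2` works.
lemma exists_badCusp_abs_sub_le (hδ : 0 < δ) {v : SL2R} (hv : v ∈ Γ) (cv : entryC v ≠ 0) :
    ∃ u, BadCusp Γ δ u ∧ |cuspPt u - cuspPt v| ≤ 2 * δ / entryC u ^ 2 := by
  set heights : Set ℝ := (fun g ↦ |entryC g|) ''
    {g | g ∈ Γ ∧ entryC g ≠ 0 ∧ |cuspPt g - cuspPt v| ≤ 2 * δ / entryC g ^ 2}
  have hne : heights.Nonempty := ⟨_, v, ⟨hv, cv, by rw [sub_self, abs_zero]; positivity⟩, rfl⟩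
  have hκ : ∀ y ∈ heights, κ ≤ y := by
    rintro _ ⟨g, ⟨hg, cg, -⟩, rfl⟩
    exact hΓ.le_abs_entryC g hg cg
  have hinf : 0 < sInf heights := hΓ.pos.trans_le (le_csInf hne hκ)
  obtain ⟨_, ⟨u, ⟨hu, cu, hun⟩, rfl⟩, hlt⟩ := exists_lt_of_csInf_lt hne
    (show sInf heights < 2 * sInf heights by linarith)
  refine ⟨u, ⟨hu, cu, fun h hh ch hhu ↦ ?_⟩, hun⟩
  by_contra! hclose
  have hhalf := hΓ.two_mul_abs_entryC_le hδκ hu hh cu ch hhu.symm hclose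
  have hδu : 2 * δ / entryC u ^ 2 ≤ δ / entryC h ^ 2 := by
    calc 2 * δ / entryC u ^ 2 ≤ 2 * δ / (2 * |entryC h|) ^ 2 := by
          rw [← sq_abs (entryC u)]
          gcongr
      _ = δ / entryC h ^ 2 / 2 := by rw [mul_pow, sq_abs]; field_simp
      _ ≤ δ / entryC h ^ 2 := half_le_self (by positivity)
  have hhv : |cuspPt h - cuspPt v| ≤ 2 * δ / entryC h ^ 2 := by
    have htri := abs_sub_le (cuspPt h) (cuspPt u) (cuspPt v)
    rw [abs_sub_comm (cuspPt h) (cuspPt u)] at htri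
    calc |cuspPt h - cuspPt v| ≤ δ / entryC h ^ 2 + δ / entryC h ^ 2 := by linarith
      _ = 2 * δ / entryC h ^ 2 := by ring
  linarith [csInf_le ⟨κ, hκ⟩ ⟨h, ⟨hh, ch, hhv⟩, rfl⟩]

lemma exists_badCusp_abs_sub_lt [DiscreteTopology Γ] (hcover : HasFiniteAreaCover Γ) (hδ : 0 < δ)
    {y : ℝ} (hy : BadlyApproximable Γ (4 * δ) y) {ε : ℝ} (hε : 0 < ε) :
    ∃ u, BadCusp Γ δ u ∧ |y - cuspPt u| < ε := by
  obtain ⟨v, hv, cv, hvy⟩ := hΓ.exists_abs_cuspPt_sub_lt hcover y (half_pos hε)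
  obtain ⟨u, hu, huv⟩ := hΓ.exists_badCusp_abs_sub_le hδκ hδ hv cv
  refine ⟨u, hu, ?_⟩
  have hfar := hy u hu.mem hu.entryC_ne_zero
  have htri := abs_sub_le y (cuspPt v) (cuspPt u)
  rw [abs_sub_comm y (cuspPt v), abs_sub_comm (cuspPt v) (cuspPt u)] at htri
  have hfour : 4 * δ / entryC u ^ 2 = 2 * (2 * δ / entryC u ^ 2) := by ring
  linarith

end CuspGap

lemma le_abs_of_div_sq_lt {η c N : ℝ} (hη : 0 < η) (hc : c ≠ 0)
    (h : η / c ^ 2 < η / (N ^ 2 + 1)) : N ≤ |c| := by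
  rw [div_lt_div_iff_of_pos_left hη (by positivity) (by positivity)] at h
  exact (le_abs_self N).trans (sq_le_sq.1 (by linarith))

lemma CuspGap.exists_badCusp_pair {Γ : Subgroup SL2R} [DiscreteTopology Γ] {κ : ℝ}
    (hΓ : CuspGap Γ κ) (hcover : HasFiniteAreaCover Γ) {t ε : ℝ} (ht : 0 ≤ t) (hε : 0 < ε)
    (N : ℝ) : ∃ h k, BadCusp Γ (κ / 1296) h ∧ BadCusp Γ (κ / 1296) k ∧ N ≤ |entryC h| ∧
      N ≤ |entryC k| ∧ |(|cuspPt h - cuspPt k| - t)| ≤ ε := by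
  have hκ := hΓ.pos
  obtain ⟨x, hx, hxt⟩ := hΓ.exists_badlyApproximable_pair t
  set ε' := min (ε / 2) (κ / 324 / (N ^ 2 + 1))
  have hε' : 0 < ε' := lt_min (by positivity) (by positivity)
  have near : ∀ y, BadlyApproximable Γ (κ / 324) y →
      ∃ u, BadCusp Γ (κ / 1296) u ∧ N ≤ |entryC u| ∧ |y - cuspPt u| < ε / 2 := by
    intro y hy
    obtain ⟨u, hu, huy⟩ := hΓ.exists_badCusp_abs_sub_lt (δ := κ / 1296) (by linarith) hcover
      (by positivity) (by convert hy using 1; ring) hε'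
    exact ⟨u, hu, le_abs_of_div_sq_lt (by positivity) hu.entryC_ne_zero
      ((hy u hu.mem hu.entryC_ne_zero).trans_lt (huy.trans_le (min_le_right _ _))),
      huy.trans_le (min_le_left _ _)⟩
  obtain ⟨h, hh, hhN, hhx⟩ := near x hx
  obtain ⟨k, hk, hkN, hkx⟩ := near (x + t) hxt
  refine ⟨h, k, hh, hk, hhN, hkN, ?_⟩
  calc |(|cuspPt h - cuspPt k| - t)| = |(|cuspPt k - cuspPt h| - |t|)| := by
        rw [abs_sub_comm (cuspPt h), abs_of_nonneg ht]
    _ ≤ |cuspPt k - cuspPt h - t| := abs_abs_sub_abs_le_abs_sub _ _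
    _ = |(x - cuspPt h) - (x + t - cuspPt k)| := by congr 1; ring
    _ ≤ |x - cuspPt h| + |x + t - cuspPt k| := abs_sub _ _
    _ ≤ ε := by linarith

lemma entryC_translation_mul (b : ℝ) (g : SL2R) : entryC (translation b * g) = entryC g := by
  simp [entryC_mul]

lemma cuspPt_translation_mul (b : ℝ) {g : SL2R} (hg : entryC g ≠ 0) :
    cuspPt (translation b * g) = cuspPt g + b := by
  rw [cuspPt, entryC_translation_mul, entryA_mul, entryA_translation, entryB_translation, cuspPt]
  field_simp

namespace BadCusp

variable {Γ : Subgroup SL2R} {δ : ℝ} {g : SL2R} (hg : BadCusp Γ δ g)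
include hg

lemma inv : BadCusp Γ δ g⁻¹ := by
  have cg := hg.entryC_ne_zero
  refine ⟨Γ.inv_mem hg.mem, entryC_inv_ne_zero cg, fun h hh ch hne ↦ ?_⟩
  have hgh := abs_entryC_mul cg ch
  have cgh := entryC_mul_ne_zero cg ch hne.symm
  have hh' := entryC_inv_mul cg cgh
  rw [inv_mul_cancel_left] at hh'
  have hbad := hg.le_abs_sub (g * h) (Γ.mul_mem hg.mem hh) cgh fun h ↦ ch (by simp [hh', h])
  apply_fun abs at hh'
  rw [abs_mul, abs_mul] at hh'
  rw [div_le_iff₀ (by positivity), ← sq_abs] at hbad ⊢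
  refine le_of_mul_le_mul_right ?_ (abs_pos.2 cg)
  calc δ * |entryC g| ≤ |cuspPt g - cuspPt (g * h)| * |entryC (g * h)| ^ 2 * |entryC g| := by gcongr
    _ = (|entryC g| * |entryC (g * h)| * |cuspPt g - cuspPt (g * h)|) * |entryC (g * h)| := by ring
    _ = |entryC h| * (|entryC g| * |entryC h| * |cuspPt g⁻¹ - cuspPt h|) := by rw [← hh', hgh]
    _ = |cuspPt g⁻¹ - cuspPt h| * |entryC h| ^ 2 * |entryC g| := by ring

lemma translation_mul {b : ℝ} (hb : translation b ∈ Γ) : BadCusp Γ δ (translation b * g) := by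
  have cg := hg.entryC_ne_zero
  refine ⟨Γ.mul_mem hb hg.mem, by rwa [entryC_translation_mul], fun h hh ch hne ↦ ?_⟩
  have hneg : translation (-b) ∈ Γ := by
    rw [translation_neg]
    exact Γ.inv_mem hb
  rw [cuspPt_translation_mul b cg] at hne ⊢
  have := hg.le_abs_sub (translation (-b) * h) (Γ.mul_mem hneg hh)
    (by rwa [entryC_translation_mul])
    (by rw [cuspPt_translation_mul _ ch]; exact fun h ↦ hne (by linarith))
  rw [entryC_translation_mul, cuspPt_translation_mul _ ch] at this
  convert this using 2
  ring

end BadCusp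

/-! ### Infinite products at the boundary -/

section Thread

variable {X : Type*} {D : ℕ → Set X} {R : ℕ → X → X → Prop} (hne : ∀ n, (D n).Nonempty)
  (hback : ∀ n, ∀ z ∈ D (n + 1), ∃ w ∈ D n, R n w z)
include hne hback

lemma exists_finite_thread {N : ℕ} {z : X} (hz : z ∈ D N) :
    ∃ x : ℕ → X, x N = z ∧ (∀ n, x n ∈ D n) ∧ ∀ n < N, R n (x n) (x (n + 1)) := by
  induction N generalizing z with
  | zero =>
    choose y hy using hne
    refine ⟨Function.update y 0 z, Function.update_self .., fun n ↦ ?_, by simp⟩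
    obtain rfl | hn := eq_or_ne n 0
    · rwa [Function.update_self]
    · rw [Function.update_of_ne hn]
      exact hy n
  | succ N ih =>
    obtain ⟨w, hw, hwz⟩ := hback N z hz
    obtain ⟨x, hxw, hxD, hxR⟩ := ih hw
    refine ⟨Function.update x (N + 1) z, Function.update_self .., fun n ↦ ?_, fun n hn ↦ ?_⟩
    · obtain rfl | hn := eq_or_ne n (N + 1)
      · rwa [Function.update_self]
      · rw [Function.update_of_ne hn]
        exact hxD n
    · rw [Function.update_of_ne hn.ne]
      obtain rfl | hnN := eq_or_lt_of_le (Nat.lt_succ_iff.1 hn)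
      · rwa [Function.update_self, hxw]
      · rw [Function.update_of_ne (by lia)]
        exact hxR n hnN

lemma exists_thread_of_isCompact [TopologicalSpace X] [T2Space X] (hD : ∀ n, IsCompact (D n))
    (hR : ∀ n, IsClosed {p : X × X | R n p.1 p.2}) :
    ∃ x : ℕ → X, ∀ n, x n ∈ D n ∧ R n (x n) (x (n + 1)) := by
  let S : ℕ → Set (ℕ → X) := fun N ↦ Set.univ.pi D ∩ ⋂ n < N, {x | R n (x n) (x (n + 1))}
  have hcompact : IsCompact (Set.univ.pi D) := isCompact_univ_pi hD
  have hclosed : ∀ N, IsClosed (S N) := fun N ↦ hcompact.isClosed.inter <|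
    isClosed_biInter fun n _ ↦ (hR n).preimage (f := fun x : ℕ → X ↦ (x n, x (n + 1))) (by fun_prop)
  obtain ⟨x, hx⟩ := IsCompact.nonempty_iInter_of_sequence_nonempty_isCompact_isClosed S
    (fun N ↦ Set.inter_subset_inter_right _
      (Set.biInter_subset_biInter_left fun n hn ↦ Nat.lt_succ_of_lt hn))
    (fun N ↦ by
      obtain ⟨z, hz⟩ := hne N
      obtain ⟨x, -, hxD, hxR⟩ := exists_finite_thread hne hback hz
      exact ⟨x, fun n _ ↦ hxD n, Set.mem_iInter₂.2 hxR⟩)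
    (hcompact.of_isClosed_subset (hclosed 0) Set.inter_subset_left) hclosed
  rw [Set.mem_iInter] at hx
  exact ⟨x, fun n ↦ ⟨(hx 0).1 n trivial, Set.mem_iInter₂.1 (hx (n + 1)).2 n n.lt_succ_self⟩⟩

end Thread

/-- The Möbius action `g·z = y` between finite real points `z` and `y`, as a relation so that the
pole of `g` is excluded rather than sent to a junk value. -/
def IsMoebiusImage (g : SL2R) (z y : ℝ) : Prop :=
  entryC g * z + entryD g ≠ 0 ∧ (entryC g * z + entryD g) * y = entryA g * z + entryB g

lemma isMoebiusImage_one (z : ℝ) : IsMoebiusImage 1 z z := by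
  simp [IsMoebiusImage, entryA, entryB, entryC, entryD]

lemma isMoebiusImage_cuspPt {g h : SL2R} (hh : entryC h ≠ 0) (hgh : entryC (g * h) ≠ 0) :
    IsMoebiusImage g (cuspPt h) (cuspPt (g * h)) := by
  have hC : entryC g * cuspPt h + entryD g = entryC (g * h) / entryC h := by
    rw [entryC_mul, cuspPt]
    field_simp
  have hA : entryA g * cuspPt h + entryB g = entryA (g * h) / entryC h := by
    rw [entryA_mul, cuspPt]
    field_simp
  rw [IsMoebiusImage, hC, hA, cuspPt]
  exact ⟨div_ne_zero hgh hh, by field_simp⟩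

lemma isMoebiusImage_iff {g : SL2R} (hg : entryC g ≠ 0) {z y : ℝ} :
    IsMoebiusImage g z y ↔ entryC g ^ 2 * (z - cuspPt g⁻¹) * (y - cuspPt g) = -1 := by
  have hprod : entryC g ^ 2 * (z - cuspPt g⁻¹) * (y - cuspPt g) =
      (entryC g * z + entryD g) * (entryC g * y - entryA g) := by
    rw [cuspPt, cuspPt, entryA_inv, entryC_inv]
    field_simp
    ring
  have hdet := entry_det g
  rw [hprod]
  refine ⟨fun ⟨_, h⟩ ↦ by linear_combination entryC g * h - hdet, fun h ↦ ⟨fun h0 ↦ ?_, ?_⟩⟩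
  · simp [h0] at h
  · exact mul_left_cancel₀ hg (by linear_combination h + hdet)

namespace IsMoebiusImage

variable {g h : SL2R} {z y w : ℝ}

lemma mul (hg : IsMoebiusImage g y w) (hh : IsMoebiusImage h z y) :
    IsMoebiusImage (g * h) z w := by
  have hC : entryC (g * h) * z + entryD (g * h) =
      (entryC g * y + entryD g) * (entryC h * z + entryD h) := by
    rw [entryC_mul, entryD_mul]
    linear_combination -entryC g * hh.2
  refine ⟨hC ▸ mul_ne_zero hg.1 hh.1, ?_⟩
  rw [hC, entryA_mul, entryB_mul]
  linear_combination (entryC h * z + entryD h) * hg.2 + entryA g * hh.2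

lemma inv (hg : IsMoebiusImage g z y) : IsMoebiusImage g⁻¹ y z := by
  have hdet := entry_det g
  have hone : (entryC g * z + entryD g) * (entryC g⁻¹ * y + entryD g⁻¹) = 1 := by
    rw [entryC_inv, entryD_inv]
    linear_combination hdet - entryC g * hg.2
  refine ⟨right_ne_zero_of_mul_eq_one hone, mul_left_cancel₀ hg.1 ?_⟩
  rw [← mul_assoc, hone, one_mul, entryA_inv, entryB_inv]
  linear_combination -z * hdet - entryD g * hg.2

end IsMoebiusImage

/-- The approximation constant `1 / (c² |x - g·∞|)` of `x` by the cusp `g·∞`, equal to `0` at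
`x = g·∞`. -/
def approxConst (x : ℝ) (g : SL2R) : ℝ := 1 / (entryC g ^ 2 * |x - cuspPt g|)

lemma approxConst_le {x : ℝ} {g : SL2R} {κ s : ℝ} (hκ : 0 < κ) (hs : 0 < s)
    (hg : κ ≤ |entryC g|) (hx : s ≤ |x - cuspPt g|) : approxConst x g ≤ 1 / (κ ^ 2 * s) := by
  rw [approxConst, ← sq_abs (entryC g)]
  gcongr

lemma approxConst_le_one_div {x : ℝ} {g : SL2R} {s : ℝ} (hg : entryC g ≠ 0) (hs : 0 < s)
    (hx : s ≤ |x - cuspPt g|) : approxConst x g ≤ 1 / (entryC g ^ 2 * s) := by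
  rw [approxConst]
  gcongr

lemma IsMoebiusImage.abs_sub_cuspPt_inv {g : SL2R} {z y : ℝ} (hg : entryC g ≠ 0)
    (h : IsMoebiusImage g z y) : |z - cuspPt g⁻¹| = approxConst y g := by
  have hprod := congr_arg abs ((isMoebiusImage_iff hg).1 h)
  rw [abs_mul, abs_mul, abs_of_nonneg (sq_nonneg _), abs_neg, abs_one] at hprod
  have hne : entryC g ^ 2 * |y - cuspPt g| ≠ 0 := fun h0 ↦ by
    rw [mul_right_comm, h0, zero_mul] at hprod
    exact zero_ne_one hprod
  rw [approxConst, eq_div_iff hne, ← hprod]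
  ring

lemma exists_isMoebiusImage {g : SL2R} (hg : entryC g ≠ 0) {y : ℝ} (hy : y ≠ cuspPt g) :
    ∃ z, IsMoebiusImage g z y := by
  have := sub_ne_zero.2 hy
  refine ⟨cuspPt g⁻¹ - 1 / (entryC g ^ 2 * (y - cuspPt g)), (isMoebiusImage_iff hg).2 ?_⟩
  field_simp
  ring

lemma abs_cuspPt_inv_mul_sub {g h : SL2R} (hg : entryC g ≠ 0) (hh : entryC h ≠ 0)
    (hgh : entryC (g⁻¹ * h) ≠ 0) :
    |cuspPt (g⁻¹ * h) - cuspPt g⁻¹| = approxConst (cuspPt h) g := by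
  have := (isMoebiusImage_cuspPt hh hgh).inv
  rw [inv_inv] at this
  exact this.abs_sub_cuspPt_inv hg

lemma BadCusp.approxConst_le {Γ : Subgroup SL2R} {δ : ℝ} {g h : SL2R} (hg : BadCusp Γ δ g)
    (hδ : 0 < δ) (hh : h ∈ Γ) (ch : entryC h ≠ 0) : approxConst (cuspPt g) h ≤ 1 / δ := by
  obtain heq | hne := eq_or_ne (cuspPt h) (cuspPt g)
  · rw [approxConst, heq, sub_self, abs_zero, mul_zero, div_zero]
    positivity
  · have hbad := hg.le_abs_sub h hh ch hne
    rw [div_le_iff₀' (by positivity)] at hbad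
    exact one_div_le_one_div_of_le hδ hbad

/-- The product `B 0 * B 1 * ⋯ * B (n - 1)`. -/
def prefixProd (B : ℕ → SL2R) : ℕ → SL2R
  | 0 => 1
  | n + 1 => prefixProd B n * B n

/-- The element `g` seen from the `n`-th stage of the infinite product `B 0 * B 1 * ⋯`. -/
def stripPrefix (B : ℕ → SL2R) (g : SL2R) (n : ℕ) : SL2R := (prefixProd B n)⁻¹ * g

lemma prefixProd_one (B : ℕ → SL2R) : prefixProd B 1 = B 0 := one_mul _

lemma prefixProd_succ (B : ℕ → SL2R) (n : ℕ) :
    prefixProd B (n + 1) = prefixProd B n * B n := rfl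

lemma stripPrefix_zero (B : ℕ → SL2R) (g : SL2R) : stripPrefix B g 0 = g := by
  rw [stripPrefix, prefixProd, inv_one, one_mul]

lemma stripPrefix_eq_mul (B : ℕ → SL2R) (g : SL2R) (n : ℕ) :
    stripPrefix B g n = B n * stripPrefix B g (n + 1) := by
  rw [stripPrefix, stripPrefix, prefixProd_succ, mul_inv_rev, mul_assoc, mul_inv_cancel_left]

/-- Local conditions making the infinite product `B 0 * B 1 * ⋯` converge at the boundary: `B n`
is so contracting that it maps everything at distance at least `r` from `(B n)⁻¹·∞` into the
`r / 2`-neighbourhood of `B n·∞`, and `(B n)⁻¹·∞` stays away from `B (n + 1)·∞`. -/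
structure GluingSequence (Γ : Subgroup SL2R) (δ r : ℝ) (B : ℕ → SL2R) : Prop where
  pos : 0 < r
  badCusp : ∀ n, BadCusp Γ δ (B n)
  two_le : ∀ n, 2 ≤ r ^ 2 * entryC (B n) ^ 2
  four_mul_le : ∀ n, 4 * r ≤ |cuspPt (B n)⁻¹ - cuspPt (B (n + 1))|

/-- `x n` is the boundary point `B n * B (n + 1) * ⋯ ·∞`. -/
structure IsGluedLimit (B : ℕ → SL2R) (r : ℝ) (x : ℕ → ℝ) : Prop where
  abs_sub_le : ∀ n, |x n - cuspPt (B n)| ≤ 1 / (entryC (B n) ^ 2 * r)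
  isMoebiusImage : ∀ n, IsMoebiusImage (B n) (x (n + 1)) (x n)

lemma IsGluedLimit.isMoebiusImage_prefixProd {B : ℕ → SL2R} {r : ℝ} {x : ℕ → ℝ}
    (hx : IsGluedLimit B r x) (n : ℕ) : IsMoebiusImage (prefixProd B n) (x n) (x 0) := by
  induction n with
  | zero => exact isMoebiusImage_one _
  | succ n ih => exact ih.mul (hx.isMoebiusImage n)

namespace GluingSequence

variable {Γ : Subgroup SL2R} {κ δ r : ℝ} {B : ℕ → SL2R} (hB : GluingSequence Γ δ r B)
include hB

lemma entryC_ne_zero (n : ℕ) : entryC (B n) ≠ 0 := (hB.badCusp n).entryC_ne_zero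

lemma prefixProd_mem (n : ℕ) : prefixProd B n ∈ Γ := by
  induction n with
  | zero => exact Γ.one_mem
  | succ n ih => exact Γ.mul_mem ih (hB.badCusp n).mem

lemma stripPrefix_mem {g : SL2R} (hg : g ∈ Γ) (n : ℕ) : stripPrefix B g n ∈ Γ :=
  Γ.mul_mem (Γ.inv_mem (hB.prefixProd_mem n)) hg

lemma one_div_le (n : ℕ) : 1 / (entryC (B n) ^ 2 * r) ≤ r / 2 := by
  have := hB.entryC_ne_zero n
  have := hB.pos
  rw [div_le_iff₀ (by positivity)]
  linarith [hB.two_le n]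

lemma two_le_abs_entryC_mul (n : ℕ) : 2 ≤ |entryC (B n)| * (3 * r) := by
  have hr := hB.pos
  have hone : 1 ≤ |r * entryC (B n)| := by
    rw [← one_le_sq_iff_one_le_abs, mul_pow]
    linarith [hB.two_le n]
  rw [abs_mul, abs_of_pos hr] at hone
  linarith

lemma three_mul_le_of_near_left {n : ℕ} {y : ℝ} (hy : |y - cuspPt (B n)⁻¹| ≤ r) :
    3 * r ≤ |y - cuspPt (B (n + 1))| := by
  have := abs_sub_le (cuspPt (B n)⁻¹) y (cuspPt (B (n + 1)))
  rw [abs_sub_comm _ y] at this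
  linarith [hB.four_mul_le n]

lemma three_mul_le_of_near_right {n : ℕ} {y : ℝ} (hy : |y - cuspPt (B (n + 1))| ≤ r) :
    3 * r ≤ |cuspPt (B n)⁻¹ - y| := by
  linarith [hB.four_mul_le n, abs_sub_le (cuspPt (B n)⁻¹) y (cuspPt (B (n + 1)))]

lemma approxConst_le_of_three_mul_le {y : ℝ} {g : SL2R} (hg : entryC g ≠ 0)
    (hy : 3 * r ≤ |y - cuspPt g|) : approxConst y g ≤ 1 / (entryC g ^ 2 * r) :=
  approxConst_le_one_div hg hB.pos (by linarith [hB.pos])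

lemma prefixProd_succ_near (n : ℕ) : entryC (prefixProd B (n + 1)) ≠ 0 ∧
    |cuspPt (prefixProd B (n + 1))⁻¹ - cuspPt (B n)⁻¹| ≤ 1 / (entryC (B n) ^ 2 * r) := by
  have hr := hB.pos
  induction n with
  | zero =>
    rw [prefixProd_one, sub_self, abs_zero]
    exact ⟨hB.entryC_ne_zero 0, by positivity⟩
  | succ n ih =>
    obtain ⟨hA, hnear⟩ := ih
    have hfar := hB.three_mul_le_of_near_left
      ((hnear.trans (hB.one_div_le n)).trans (half_le_self hr.le))
    have hc := hB.entryC_ne_zero (n + 1)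
    have hAB : entryC (prefixProd B (n + 1) * B (n + 1)) ≠ 0 :=
      entryC_mul_ne_zero hA hc (sub_ne_zero.1 (abs_pos.1 (hfar.trans_lt' (by positivity))))
    refine ⟨hAB, ?_⟩
    rw [prefixProd_succ, mul_inv_rev, abs_cuspPt_inv_mul_sub hc (entryC_inv_ne_zero hA)
      (mul_inv_rev (prefixProd B (n + 1)) (B (n + 1)) ▸ entryC_inv_ne_zero hAB)]
    exact hB.approxConst_le_of_three_mul_le hc hfar

lemma entryC_prefixProd_succ_ne_zero (n : ℕ) : entryC (prefixProd B (n + 1)) ≠ 0 :=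
  (hB.prefixProd_succ_near n).1

lemma abs_cuspPt_prefixProd_sub_le (n : ℕ) :
    |cuspPt (prefixProd B (n + 1))⁻¹ - cuspPt (B n)⁻¹| ≤ r / 2 :=
  (hB.prefixProd_succ_near n).2.trans (hB.one_div_le n)

lemma two_mul_abs_entryC_prefixProd_le (n : ℕ) :
    2 * |entryC (prefixProd B (n + 1))| ≤ |entryC (prefixProd B (n + 2))| := by
  have hA := hB.entryC_prefixProd_succ_ne_zero n
  have hfar := hB.three_mul_le_of_near_left
    ((hB.abs_cuspPt_prefixProd_sub_le n).trans (half_le_self hB.pos.le))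
  calc 2 * |entryC (prefixProd B (n + 1))|
      ≤ |entryC (B (n + 1))| * (3 * r) * |entryC (prefixProd B (n + 1))| := by
        gcongr
        exact hB.two_le_abs_entryC_mul (n + 1)
    _ ≤ |entryC (B (n + 1))| * |cuspPt (prefixProd B (n + 1))⁻¹ - cuspPt (B (n + 1))| *
          |entryC (prefixProd B (n + 1))| := by gcongr
    _ = |entryC (prefixProd B (n + 2))| := by
        rw [prefixProd_succ B (n + 1), abs_entryC_mul hA (hB.entryC_ne_zero _)]
        ring

lemma injective_cuspPt_prefixProd (hΓ : CuspGap Γ κ) :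
    Function.Injective fun n ↦ cuspPt (prefixProd B (n + 1)) := by
  have hmono : StrictMono fun n ↦ |entryC (prefixProd B (n + 1))| := strictMono_nat_of_lt_succ
    fun n ↦ by
      have := hB.two_mul_abs_entryC_prefixProd_le n
      linarith [abs_pos.2 (hB.entryC_prefixProd_succ_ne_zero n)]
  exact fun m n hmn ↦ hmono.injective <| hΓ.abs_entryC_eq_of_cuspPt_eq (hB.prefixProd_mem _)
    (hB.prefixProd_mem _) (hB.entryC_prefixProd_succ_ne_zero m)
    (hB.entryC_prefixProd_succ_ne_zero n) hmn

lemma exists_isGluedLimit : ∃ x, IsGluedLimit B r x := by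
  have hr := hB.pos
  have hback (n : ℕ) (z : ℝ)
      (hz : z ∈ Metric.closedBall (cuspPt (B (n + 1))) (1 / (entryC (B (n + 1)) ^ 2 * r))) :
      ∃ w ∈ Metric.closedBall (cuspPt (B n)) (1 / (entryC (B n) ^ 2 * r)),
        IsMoebiusImage (B n) z w := by
    have hc := entryC_inv_ne_zero (hB.entryC_ne_zero n)
    rw [Metric.mem_closedBall, Real.dist_eq] at hz
    have hfar := hB.three_mul_le_of_near_right
      ((hz.trans (hB.one_div_le (n + 1))).trans (half_le_self hr.le))
    rw [abs_sub_comm] at hfar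
    obtain ⟨w, hw⟩ := exists_isMoebiusImage hc
      (sub_ne_zero.1 (abs_pos.1 (hfar.trans_lt' (by positivity))))
    have hnear := hw.abs_sub_cuspPt_inv hc
    have hle := hB.approxConst_le_of_three_mul_le hc hfar
    rw [← hnear, inv_inv, entryC_inv, neg_sq] at hle
    exact ⟨w, hle, inv_inv (B n) ▸ hw.inv⟩
  obtain ⟨x, hx⟩ := exists_thread_of_isCompact (R := fun n w z ↦ IsMoebiusImage (B n) z w)
    (D := fun n ↦ Metric.closedBall (cuspPt (B n)) (1 / (entryC (B n) ^ 2 * r)))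
    (fun n ↦ Metric.nonempty_closedBall.2 (by positivity)) hback
    (fun n ↦ isCompact_closedBall _ _) fun n ↦ by
      simp only [isMoebiusImage_iff (hB.entryC_ne_zero n)]
      exact isClosed_eq (by fun_prop) (by fun_prop)
  exact ⟨x, fun n ↦ (hx n).1, fun n ↦ (hx n).2⟩

section Limit

variable {x : ℕ → ℝ} (hx : IsGluedLimit B r x)
include hx

lemma abs_approxConst_prefixProd_sub_le (n : ℕ) :
    |approxConst (x 0) (prefixProd B (n + 1)) - (|cuspPt (B n)⁻¹ - cuspPt (B (n + 1))|)| ≤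
      1 / (entryC (B n) ^ 2 * r) + 1 / (entryC (B (n + 1)) ^ 2 * r) := by
  obtain ⟨hA, hnear⟩ := hB.prefixProd_succ_near n
  rw [← (hx.isMoebiusImage_prefixProd (n + 1)).abs_sub_cuspPt_inv hA, abs_sub_comm (x (n + 1))]
  calc _ ≤ |(cuspPt (prefixProd B (n + 1))⁻¹ - x (n + 1)) -
          (cuspPt (B n)⁻¹ - cuspPt (B (n + 1)))| := abs_abs_sub_abs_le_abs_sub _ _
    _ = |(cuspPt (prefixProd B (n + 1))⁻¹ - cuspPt (B n)⁻¹) -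
          (x (n + 1) - cuspPt (B (n + 1)))| := by congr 1; ring
    _ ≤ |cuspPt (prefixProd B (n + 1))⁻¹ - cuspPt (B n)⁻¹| +
          |x (n + 1) - cuspPt (B (n + 1))| := abs_sub _ _
    _ ≤ _ := add_le_add hnear (hx.abs_sub_le (n + 1))

end Limit

section Generic

variable {g : SL2R} (hg : g ∈ Γ) (cg : entryC g ≠ 0)
  (hne : ∀ n, cuspPt g ≠ cuspPt (prefixProd B (n + 1)))

include cg hne in
lemma entryC_stripPrefix_ne_zero (n : ℕ) : entryC (stripPrefix B g n) ≠ 0 := by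
  cases n with
  | zero => rwa [stripPrefix_zero]
  | succ n =>
    have hA := hB.entryC_prefixProd_succ_ne_zero n
    rw [stripPrefix, entryC_inv_mul hA cg]
    exact mul_ne_zero (mul_ne_zero hA cg) (sub_ne_zero.2 (hne n).symm)

include cg hne in
lemma two_mul_abs_entryC_stripPrefix_le {n : ℕ}
    (hnear : |cuspPt (stripPrefix B g (n + 1)) - cuspPt (B (n + 1))| ≤ r) :
    2 * |entryC (stripPrefix B g (n + 1))| ≤ |entryC (stripPrefix B g n)| := by
  have hfar := hB.three_mul_le_of_near_right hnear
  calc 2 * |entryC (stripPrefix B g (n + 1))|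
      ≤ |entryC (B n)| * (3 * r) * |entryC (stripPrefix B g (n + 1))| := by
        gcongr
        exact hB.two_le_abs_entryC_mul n
    _ ≤ |entryC (B n)| * |cuspPt (B n)⁻¹ - cuspPt (stripPrefix B g (n + 1))| *
          |entryC (stripPrefix B g (n + 1))| := by gcongr
    _ = |entryC (stripPrefix B g n)| := by
        rw [stripPrefix_eq_mul B g n, abs_entryC_mul (hB.entryC_ne_zero n)
          (hB.entryC_stripPrefix_ne_zero cg hne (n + 1))]
        ring

include hg cg hne

-- Otherwise the lower left entries would halve at each stage, against the gap.
lemma exists_lt_abs_cuspPt_stripPrefix_sub (hΓ : CuspGap Γ κ) :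
    ∃ n, r < |cuspPt (stripPrefix B g n) - cuspPt (B n)| := by
  by_contra! hnear
  have hdecay (n : ℕ) : 2 ^ n * |entryC (stripPrefix B g n)| ≤ |entryC g| := by
    induction n with
    | zero => rw [stripPrefix_zero, pow_zero, one_mul]
    | succ n ih =>
      calc 2 ^ (n + 1) * |entryC (stripPrefix B g (n + 1))|
          = 2 ^ n * (2 * |entryC (stripPrefix B g (n + 1))|) := by ring
        _ ≤ 2 ^ n * |entryC (stripPrefix B g n)| := by
            gcongr
            exact hB.two_mul_abs_entryC_stripPrefix_le cg hne (hnear (n + 1))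
        _ ≤ |entryC g| := ih
  obtain ⟨n, hn⟩ := pow_unbounded_of_one_lt (|entryC g| / κ) one_lt_two
  rw [div_lt_iff₀ hΓ.pos] at hn
  have hκ := hΓ.le_abs_entryC _ (hB.stripPrefix_mem hg n)
    (hB.entryC_stripPrefix_ne_zero cg hne n)
  have : 2 ^ n * κ ≤ 2 ^ n * |entryC (stripPrefix B g n)| := by gcongr
  linarith [hdecay n]

lemma abs_cuspPt_stripPrefix_succ_inv_sub_le (hδ : 0 < δ) (n : ℕ) :
    |cuspPt (stripPrefix B g (n + 1))⁻¹ - cuspPt (stripPrefix B g n)⁻¹| ≤ 1 / δ := by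
  have hc := hB.entryC_stripPrefix_ne_zero cg hne n
  have hinv : (stripPrefix B g (n + 1))⁻¹ = (stripPrefix B g n)⁻¹ * B n := by
    rw [stripPrefix_eq_mul B g n, mul_inv_rev, inv_mul_cancel_right]
  rw [hinv, abs_cuspPt_inv_mul_sub hc (hB.entryC_ne_zero n)
    (hinv ▸ entryC_inv_ne_zero (hB.entryC_stripPrefix_ne_zero cg hne (n + 1)))]
  exact (hB.badCusp n).approxConst_le hδ (hB.stripPrefix_mem hg n) hc

lemma abs_cuspPt_inv_sub_stripPrefix_le (hΓ : CuspGap Γ κ) {n : ℕ}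
    (hnear : |cuspPt (stripPrefix B g n) - cuspPt (B n)| ≤ r) :
    |cuspPt g⁻¹ - cuspPt (stripPrefix B g n)⁻¹| ≤ 1 / (κ ^ 2 * r) := by
  have hr := hB.pos
  have hκ := hΓ.pos
  obtain _ | n := n
  · rw [stripPrefix_zero, sub_self, abs_zero]
    positivity
  have hc := hB.entryC_stripPrefix_ne_zero cg hne (n + 1)
  have hinv : g⁻¹ = (stripPrefix B g (n + 1))⁻¹ * (prefixProd B (n + 1))⁻¹ := by
    rw [stripPrefix, mul_inv_rev, inv_inv, mul_inv_cancel_right]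
  rw [hinv, abs_cuspPt_inv_mul_sub hc (entryC_inv_ne_zero (hB.entryC_prefixProd_succ_ne_zero n))
    (hinv ▸ entryC_inv_ne_zero cg)]
  refine approxConst_le hκ hr (hΓ.le_abs_entryC _ (hB.stripPrefix_mem hg _) hc) ?_
  have hfar := hB.three_mul_le_of_near_left
    ((hB.abs_cuspPt_prefixProd_sub_le n).trans (half_le_self hr.le))
  linarith [abs_sub_le (cuspPt (prefixProd B (n + 1))⁻¹) (cuspPt (stripPrefix B g (n + 1)))
    (cuspPt (B (n + 1)))]

lemma abs_sub_cuspPt_stripPrefix_inv_le (hΓ : CuspGap Γ κ) {x : ℕ → ℝ} (hx : IsGluedLimit B r x)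
    {ω : ℝ} (hω : IsMoebiusImage g ω (x 0)) {n : ℕ}
    (hfar : r ≤ |cuspPt (stripPrefix B g n) - cuspPt (B n)|) :
    |ω - cuspPt (stripPrefix B g n)⁻¹| ≤ 2 / (κ ^ 2 * r) := by
  have hr := hB.pos
  have hc := hB.entryC_stripPrefix_ne_zero cg hne n
  have hωn : IsMoebiusImage (stripPrefix B g n) ω (x n) :=
    (hx.isMoebiusImage_prefixProd n).inv.mul hω
  rw [hωn.abs_sub_cuspPt_inv hc]
  have hxB := (hx.abs_sub_le n).trans (hB.one_div_le n)
  have htri := abs_sub_le (cuspPt (stripPrefix B g n)) (x n) (cuspPt (B n))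
  rw [abs_sub_comm _ (x n)] at htri
  refine (approxConst_le (s := r / 2) hΓ.pos (by positivity)
    (hΓ.le_abs_entryC _ (hB.stripPrefix_mem hg _) hc) (by linarith)).trans_eq ?_
  field_simp

-- At the first stage `n + 1` where `g` has left the product, going from `g⁻¹·x 0` to `g⁻¹·∞`
-- through the points `(stripPrefix B g (n + 1))⁻¹·∞` and `(stripPrefix B g n)⁻¹·∞` is cheap.
lemma approxConst_le_of_forall_ne_prefixProd (hΓ : CuspGap Γ κ) (hδ : 0 < δ) {x : ℕ → ℝ}
    (hx : IsGluedLimit B r x) : approxConst (x 0) g ≤ 3 / (κ ^ 2 * r) + 1 / δ := by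
  have hr := hB.pos
  have hκ := hΓ.pos
  have hthree : 3 / (κ ^ 2 * r) = 2 / (κ ^ 2 * r) + 1 / (κ ^ 2 * r) := by ring
  have hpos : 0 < 1 / (κ ^ 2 * r) := by positivity
  have hδ' : 0 < 1 / δ := by positivity
  obtain hx0 | hx0 := eq_or_ne (x 0) (cuspPt g)
  · rw [approxConst, hx0, sub_self, abs_zero, mul_zero, div_zero]
    positivity
  obtain ⟨ω, hω⟩ := exists_isMoebiusImage cg hx0
  rw [← hω.abs_sub_cuspPt_inv cg]
  classical
  have hex := hB.exists_lt_abs_cuspPt_stripPrefix_sub hg cg hne hΓ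
  have hfar := hB.abs_sub_cuspPt_stripPrefix_inv_le hg cg hne hΓ hx hω (Nat.find_spec hex).le
  cases hn : Nat.find hex with
  | zero =>
    rw [hn, stripPrefix_zero] at hfar
    linarith
  | succ n =>
    rw [hn] at hfar
    have hnear := not_lt.1 (Nat.find_min hex (m := n) (by lia))
    have hfirst := hB.abs_cuspPt_inv_sub_stripPrefix_le hg cg hne hΓ hnear
    have hstep := hB.abs_cuspPt_stripPrefix_succ_inv_sub_le hg cg hne hδ n
    rw [abs_sub_comm] at hfirst
    linarith [abs_sub_le ω (cuspPt (stripPrefix B g (n + 1))⁻¹) (cuspPt g⁻¹),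
      abs_sub_le (cuspPt (stripPrefix B g (n + 1))⁻¹) (cuspPt (stripPrefix B g n)⁻¹)
        (cuspPt g⁻¹)]

end Generic

end GluingSequence

/-! ### Lagrange values -/

section LagrangeValue

open Filter Topology

lemma lt_approxConst_iff {α k : ℝ} {g : SL2R} (hk : 0 < k) (hg : entryC g ≠ 0)
    (hne : α ≠ cuspPt g) : k < approxConst α g ↔ |α - cuspPt g| < 1 / (k * entryC g ^ 2) := by
  have : 0 < |α - cuspPt g| := abs_pos.2 (sub_ne_zero.2 hne)
  rw [approxConst, lt_div_iff₀ (by positivity), lt_div_iff₀ (by positivity)]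
  ring_nf

lemma CuspGap.approxConst_eq_of_cuspPt_eq {Γ : Subgroup SL2R} {κ : ℝ} (hΓ : CuspGap Γ κ)
    {g h : SL2R} (hg : g ∈ Γ) (hh : h ∈ Γ) (cg : entryC g ≠ 0) (ch : entryC h ≠ 0)
    (hgh : cuspPt g = cuspPt h) (α : ℝ) : approxConst α g = approxConst α h := by
  rw [approxConst, approxConst, ← sq_abs (entryC g), ← sq_abs (entryC h), hgh,
    hΓ.abs_entryC_eq_of_cuspPt_eq hg hh cg ch hgh]

section Enumeration

variable {Γ : Subgroup SL2R} {A : ℕ → SL2R} (hA : ∀ n, A n ∈ Γ) (cA : ∀ n, entryC (A n) ≠ 0)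
  {α : ℝ}
include hA cA

lemma limsup_approxConst_le_lagrangeValue (hinj : Function.Injective fun n ↦ cuspPt (A n)) :
    limsup (fun n ↦ ENNReal.ofReal (approxConst α (A n))) atTop ≤
      LagrangeValue Γ α := by
  refine le_of_forall_lt fun a ha ↦ ?_
  obtain ⟨d, had, hd⟩ := exists_between ha
  have hdreal : ENNReal.ofReal d.toReal = d := ENNReal.ofReal_toReal hd.ne_top
  have hdpos : 0 < d.toReal := ENNReal.toReal_pos (zero_le.trans_lt had).ne' hd.ne_top
  refine had.trans_le (le_sSup ⟨d.toReal, ⟨hdpos, ?_⟩, hdreal⟩)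
  have hfreq := frequently_lt_of_lt_limsup (h := hd)
  rw [Nat.frequently_atTop_iff_infinite] at hfreq
  refine (hfreq.image hinj.injOn).mono ?_
  rintro _ ⟨n, hn, rfl⟩
  have hlt : d.toReal < approxConst α (A n) := (ENNReal.lt_ofReal_iff_toReal_lt hd.ne_top).1 hn
  have hne : α ≠ cuspPt (A n) := fun h ↦ by
    rw [approxConst, h, sub_self, abs_zero, mul_zero, div_zero] at hlt
    linarith
  exact ⟨A n, hA n, cA n, rfl, (lt_approxConst_iff hdpos (cA n) hne).1 hlt⟩

lemma CuspGap.lagrangeValue_le_limsup_approxConst {κ K : ℝ} (hΓ : CuspGap Γ κ)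
    (hother : ∀ g ∈ Γ, entryC g ≠ 0 → (∀ n, cuspPt g ≠ cuspPt (A n)) → approxConst α g ≤ K)
    (hK : ENNReal.ofReal K ≤
      limsup (fun n ↦ ENNReal.ofReal (approxConst α (A n))) atTop) :
    LagrangeValue Γ α ≤
      limsup (fun n ↦ ENNReal.ofReal (approxConst α (A n))) atTop := by
  refine sSup_le ?_
  rintro _ ⟨k, ⟨hk, hinf⟩, rfl⟩
  by_contra! hlt
  have hKk : K < k := (ENNReal.ofReal_lt_ofReal_iff hk).1 (hK.trans_lt hlt)
  obtain ⟨N, hN⟩ := eventually_atTop.1 (eventually_lt_of_limsup_lt hlt)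
  refine hinf <| (((Set.finite_Iio N).image fun n ↦ cuspPt (A n)).insert α).subset ?_
  rintro v ⟨g, hg, cg, rfl, hclose⟩
  obtain hα | hα := eq_or_ne α (cuspPt g)
  · exact Or.inl hα.symm
  have hkg := (lt_approxConst_iff hk cg hα).2 hclose
  obtain ⟨n, hn⟩ : ∃ n, cuspPt g = cuspPt (A n) := by
    by_contra! hne
    linarith [hother g hg cg hne]
  refine Or.inr ⟨n, Set.mem_Iio.2 (not_le.1 fun hNn ↦ ?_), hn.symm⟩
  have hAn := (ENNReal.ofReal_lt_ofReal_iff hk).1 (hN n hNn)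
  rw [← hΓ.approxConst_eq_of_cuspPt_eq hg (hA n) cg (cA n) hn] at hAn
  exact hAn.not_gt hkg

end Enumeration

lemma limsup_eq_of_tendsto_even {u : ℕ → ℝ≥0∞} {L : ℝ≥0∞}
    (heven : Tendsto (fun m ↦ u (2 * m)) atTop (𝓝 L))
    (hodd : ∀ m, u (2 * m + 1) ≤ L) : limsup u atTop = L := by
  refine le_antisymm ((limsup_le_iff).2 fun z hz ↦ ?_) ?_
  · obtain ⟨M, hM⟩ := eventually_atTop.1 (heven.eventually_lt_const hz)
    filter_upwards [eventually_ge_atTop (2 * M)] with n hn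
    obtain ⟨m, rfl | rfl⟩ := n.even_or_odd'
    · exact hM m (by lia)
    · exact (hodd m).trans_lt hz
  · have hdouble : Tendsto (fun m : ℕ ↦ 2 * m) atTop atTop :=
      tendsto_id.const_mul_atTop' two_pos
    calc L = limsup (u ∘ (2 * ·)) atTop := heven.limsup_eq.symm
      _ = limsup u (map (2 * ·) atTop) := rfl
      _ ≤ limsup u atTop := limsup_le_limsup_of_le hdouble

lemma tendsto_ofReal_of_abs_sub_le {ι : Type*} {l : Filter ι} {s t e : ι → ℝ} {L : ℝ≥0∞}
    (ht : Tendsto (fun i ↦ ENNReal.ofReal (t i)) l (𝓝 L))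
    (he : Tendsto e l (𝓝 0)) (hst : ∀ i, |s i - t i| ≤ e i) :
    Tendsto (fun i ↦ ENNReal.ofReal (s i)) l (𝓝 L) := by
  have he' : Tendsto (fun i ↦ ENNReal.ofReal (e i)) l (𝓝 0) := by
    simpa using ENNReal.tendsto_ofReal he
  have hlower := ENNReal.Tendsto.sub ht he' (Or.inr ENNReal.zero_ne_top)
  have hupper := ht.add he'
  rw [tsub_zero] at hlower
  rw [add_zero] at hupper
  refine tendsto_of_tendsto_of_tendsto_of_le_of_le hlower hupper (fun i ↦ ?_) fun i ↦ ?_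
  · refine tsub_le_iff_right.2 ((ENNReal.ofReal_le_ofReal ?_).trans ENNReal.ofReal_add_le)
    linarith [(abs_le.1 (hst i)).1]
  · refine (ENNReal.ofReal_le_ofReal ?_).trans ENNReal.ofReal_add_le
    linarith [(abs_le.1 (hst i)).2]

lemma exists_le_tendsto_ofReal {a : ℝ} {L : ℝ≥0∞} (ha : ENNReal.ofReal a ≤ L) :
    ∃ t : ℕ → ℝ, (∀ n, a ≤ t n) ∧
      Tendsto (fun n ↦ ENNReal.ofReal (t n)) atTop (𝓝 L) := by
  have hfin (n : ℕ) : min L (ENNReal.ofReal (a + n)) ≠ ⊤ :=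
    ((min_le_right _ _).trans_lt ENNReal.ofReal_lt_top).ne
  refine ⟨fun n ↦ (min L (ENNReal.ofReal (a + n))).toReal, fun n ↦ ?_, ?_⟩
  · rw [← ENNReal.ofReal_le_iff_le_toReal (hfin n)]
    exact le_min ha (ENNReal.ofReal_le_ofReal (by simp))
  · simp only [ENNReal.ofReal_toReal (hfin _)]
    have htop : Tendsto (fun n : ℕ ↦ ENNReal.ofReal (a + n)) atTop (𝓝 ⊤) :=
      ENNReal.tendsto_ofReal_atTop.comp
        (tendsto_atTop_add_const_left _ a tendsto_natCast_atTop_atTop)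
    simpa using tendsto_const_nhds.min htop

end LagrangeValue

/-! ### Points with prescribed Lagrange value -/

section Construction

open Filter Topology

lemma BadCusp.exists_turn {Γ : Subgroup SL2R} {δ μ : ℝ} {k : SL2R} (hk : BadCusp Γ δ k)
    (hμ : 0 < μ) (hμΓ : translation μ ∈ Γ) (y : ℝ) :
    ∃ b, BadCusp Γ δ b ∧ |entryC b| = |entryC k| ∧ cuspPt b⁻¹ = cuspPt k ∧
      μ ≤ |y - cuspPt b| ∧ |y - cuspPt b| ≤ 2 * μ := by
  set j : ℤ := ⌊(y - cuspPt k⁻¹) / μ⌋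
  have hfloor := Int.floor_le ((y - cuspPt k⁻¹) / μ)
  have hlt := Int.lt_floor_add_one ((y - cuspPt k⁻¹) / μ)
  rw [le_div_iff₀ hμ] at hfloor
  rw [div_lt_iff₀ hμ] at hlt
  refine ⟨translation ((j - 1 : ℤ) * μ) * k⁻¹,
    hk.inv.translation_mul (translation_zsmul_mem hμΓ _), ?_, ?_, ?_⟩
  · rw [entryC_translation_mul, entryC_inv, abs_neg]
  · rw [mul_inv_rev, inv_inv, ← translation_neg, cuspPt, cuspPt]
    simp [entryA_mul, entryC_mul]
  · rw [cuspPt_translation_mul _ (entryC_inv_ne_zero hk.entryC_ne_zero)]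
    push_cast
    rw [abs_of_nonneg (by linarith)]
    constructor <;> linarith

/-- The sequence `u 0, v 0, u 1, v 1, …`. -/
def interleave {α : Type*} (u v : ℕ → α) (n : ℕ) : α := if Even n then u (n / 2) else v (n / 2)

lemma interleave_two_mul {α : Type*} (u v : ℕ → α) (m : ℕ) : interleave u v (2 * m) = u m := by
  simp [interleave]

lemma interleave_two_mul_add_one {α : Type*} (u v : ℕ → α) (m : ℕ) :
    interleave u v (2 * m + 1) = v m := by
  simp [interleave, show (2 * m + 1) / 2 = m by lia]

lemma forall_interleave {α : Type*} {u v : ℕ → α} {p : ℕ → α → Prop} (hu : ∀ m, p m (u m))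
    (hv : ∀ m, p m (v m)) (n : ℕ) : p (n / 2) (interleave u v n) := by
  rw [interleave]
  split_ifs
  exacts [hu _, hv _]

lemma entryC_bounds_of_le {r : ℝ} (hr : 0 < r) {m : ℕ} {g : SL2R}
    (hg : (m + 2) * (1 + 1 / r) ≤ |entryC g|) :
    2 ≤ r ^ 2 * entryC g ^ 2 ∧ 1 / (entryC g ^ 2 * r) ≤ 1 / (m + 1) := by
  have : (0 : ℝ) ≤ m := m.cast_nonneg
  have hsplit : ((m : ℝ) + 2) * (1 + 1 / r) * r = (m + 2) * r + (m + 2) := by field_simp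
  have hgr : (m : ℝ) + 2 ≤ |entryC g| * r := by nlinarith
  have hg1 : 1 ≤ |entryC g| := by nlinarith [one_div_pos.2 hr]
  rw [← sq_abs (entryC g)]
  refine ⟨by nlinarith, one_div_le_one_div_of_le (by positivity) ?_⟩
  nlinarith

lemma CuspGap.exists_gluingSequence {Γ : Subgroup SL2R} [DiscreteTopology Γ] {κ μ : ℝ}
    (hΓ : CuspGap Γ κ) (hcover : HasFiniteAreaCover Γ) (hμ : 0 < μ) (hμΓ : translation μ ∈ Γ)
    {t : ℕ → ℝ} (ht : ∀ m, μ + 1 ≤ t m) :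
    ∃ B, GluingSequence Γ (κ / 1296) (μ / 4) B ∧
      (∀ n, 1 / (entryC (B n) ^ 2 * (μ / 4)) ≤ 1 / ((n / 2 : ℕ) + 1)) ∧
      (∀ m, |(|cuspPt (B (2 * m))⁻¹ - cuspPt (B (2 * m + 1))| - t m)| ≤ 1 / (m + 1)) ∧
      ∀ m, |cuspPt (B (2 * m + 1))⁻¹ - cuspPt (B (2 * m + 2))| ≤ 2 * μ := by
  have hr : 0 < μ / 4 := by positivity
  choose k h hk hh hkN hhN hkh using fun m : ℕ ↦ hΓ.exists_badCusp_pair hcover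
    (t := t m) (ε := 1 / (m + 1)) (by linarith [ht m]) (by positivity)
    ((m + 2) * (1 + 1 / (μ / 4)))
  choose b hb hbk hbk' hturn hturn' using fun m ↦
    (hk m).exists_turn hμ hμΓ (cuspPt (h (m - 1))⁻¹)
  have hsize := forall_interleave (u := b) (v := h)
    (p := fun m g ↦ (m + 2) * (1 + 1 / (μ / 4)) ≤ |entryC g|) (fun m ↦ hbk m ▸ hkN m) hhN
  have hgap_odd (m : ℕ) : interleave b h (2 * m + 2) = b (m + 1) :=
    interleave_two_mul b h (m + 1)
  refine ⟨interleave b h, ⟨hr, forall_interleave (p := fun _ ↦ BadCusp Γ _) hb hh,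
    fun n ↦ (entryC_bounds_of_le hr (hsize n)).1, fun n ↦ ?_⟩,
    fun n ↦ (entryC_bounds_of_le hr (hsize n)).2, fun m ↦ ?_, fun m ↦ ?_⟩
  · rw [mul_div_cancel₀ μ four_ne_zero]
    obtain ⟨m, rfl | rfl⟩ := n.even_or_odd'
    · rw [interleave_two_mul, interleave_two_mul_add_one, hbk']
      have hm : 1 / ((m : ℝ) + 1) ≤ 1 := div_le_one_of_le₀ (by simp) (by positivity)
      linarith [ht m, (abs_le.1 (hkh m)).1]
    · rw [interleave_two_mul_add_one, hgap_odd]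
      exact hturn (m + 1)
  · rw [interleave_two_mul, interleave_two_mul_add_one, hbk']
    exact hkh m
  · rw [interleave_two_mul_add_one, hgap_odd]
    exact hturn' (m + 1)

lemma CuspGap.mem_lagrangeSpectrum {Γ : Subgroup SL2R} [DiscreteTopology Γ] {κ μ : ℝ}
    (hΓ : CuspGap Γ κ) (hcover : HasFiniteAreaCover Γ) (hμ : 0 < μ) (hμΓ : translation μ ∈ Γ)
    {L : ℝ≥0∞}
    (hL : ENNReal.ofReal (3 / (κ ^ 2 * (μ / 4)) + 1 / (κ / 1296) + 3 * μ + 1) ≤ L) :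
    L ∈ LagrangeSpectrum Γ := by
  have hκ := hΓ.pos
  set K : ℝ := 3 / (κ ^ 2 * (μ / 4)) + 1 / (κ / 1296)
  have hKpos : 0 < K := by positivity
  obtain ⟨t, hLt, ht⟩ := exists_le_tendsto_ofReal hL
  obtain ⟨B, hB, hsize, heven, hodd⟩ := hΓ.exists_gluingSequence hcover hμ hμΓ
    fun m ↦ show μ + 1 ≤ t m by linarith [hLt m]
  obtain ⟨x, hx⟩ := hB.exists_isGluedLimit
  have hgap := hB.abs_approxConst_prefixProd_sub_le hx
  have hlim : limsup (fun n ↦ ENNReal.ofReal (approxConst (x 0) (prefixProd B (n + 1)))) atTop =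
      L := by
    refine limsup_eq_of_tendsto_even
      (tendsto_ofReal_of_abs_sub_le (e := fun m : ℕ ↦ 3 * (1 / (m + 1))) ht ?_ fun m ↦ ?_)
      fun m ↦ (ENNReal.ofReal_le_ofReal ?_).trans hL
    · simpa using (tendsto_one_div_add_atTop_nhds_zero_nat (𝕜 := ℝ)).const_mul 3
    · have h0 := hsize (2 * m)
      have h1 := hsize (2 * m + 1)
      rw [show 2 * m / 2 = m by lia] at h0
      rw [show (2 * m + 1) / 2 = m by lia] at h1
      linarith [abs_sub_le (approxConst (x 0) (prefixProd B (2 * m + 1)))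
        |cuspPt (B (2 * m))⁻¹ - cuspPt (B (2 * m + 1))| (t m), hgap (2 * m), heven m]
    · linarith [(abs_le.1 (hgap (2 * m + 1))).2, hodd m, hB.one_div_le (2 * m + 1),
        hB.one_div_le (2 * m + 2)]
  have hmem (n : ℕ) := hB.prefixProd_mem (n + 1)
  have hKL : ENNReal.ofReal K ≤ L := (ENNReal.ofReal_le_ofReal (by linarith)).trans hL
  exact ⟨x 0, (le_antisymm (hΓ.lagrangeValue_le_limsup_approxConst hmem
    hB.entryC_prefixProd_succ_ne_zero (fun g hg cg hne ↦
      hB.approxConst_le_of_forall_ne_prefixProd hg cg hne hΓ (by positivity) hx)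
    (hKL.trans hlim.ge))
    (limsup_approxConst_le_lagrangeValue hmem hB.entryC_prefixProd_succ_ne_zero
      (hB.injective_cuspPt_prefixProd hΓ))).trans hlim⟩

end Construction

theorem exists_hallRay_of_hasCuspAtInfty {Γ : Subgroup SL2R} [DiscreteTopology Γ]
    (hcover : HasFiniteAreaCover Γ) (hcusp : HasCuspAtInfty Γ) :
    ∃ L₀ : ℝ, ∀ L : ℝ≥0∞, ENNReal.ofReal L₀ ≤ L → L ∈ LagrangeSpectrum Γ := by
  obtain ⟨μ, hμ, hμΓ⟩ := hcusp.exists_pos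
  obtain ⟨κ, hΓ⟩ := exists_cuspGap hμ hμΓ
  exact ⟨_, fun _ ↦ hΓ.mem_lagrangeSpectrum hcover hμ hμΓ⟩

/-- **Hall rays at other cusps.** If `G ≤ SL(2,ℝ)` is a non-uniform lattice and
`e ∈ ℝ` is a cusp of `G`, then for every `ḡ ∈ SL(2,ℝ)` with `ḡ·e = ∞` (that is,
`c(ḡ)e + d(ḡ) = 0`), the Lagrange spectrum of the conjugate group `ḡGḡ⁻¹` at `∞`
contains a Hall ray. -/
theorem hall_ray_at_other_cusps (G : Subgroup SL2R) (hG : IsNonUniformLattice G)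
    (e : ℝ) (he : IsCuspPointOf G e)
    (gbar : SL2R) (hgbar : entryC gbar * e + entryD gbar = 0) :
    ∃ L₀ : ℝ, ∀ L : ℝ≥0∞, ENNReal.ofReal L₀ ≤ L →
      L ∈ LagrangeSpectrum (Subgroup.map (MulAut.conj gbar).toMonoidHom G) := by
  have := discreteTopology_of_isDiscreteSubgroup hG.1
  have := discreteTopology_map_conj G gbar
  exact exists_hallRay_of_hasCuspAtInfty (hG.hasFiniteAreaCover.map_conj gbar)
    (he.hasCuspAtInfty_conj hgbar)
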